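/- Restricted Automata Equivalence: Let P be a cyclic proof satisfying the three conditions (finitely progressing, dynamic, balanced) with respect to a node ν and trace values τ ∈ TraceVals_𝒜(ν), τ' ∈ TraceVals_𝒞(ν), and let N = 2 + C(P)·maxStep(P)·W(P) + W(P). Then for ∼ ∈ {<, ≤}: L_{ℬ^{(P,ν)}_{(τ,τ')}} ∼ L_{𝒜(N)^{(P,ν)}_{(τ,τ')}} and ℬ^{(P,ν)}_{(τ,τ')} is grounded, if and only if τ' ∼^ν_P τ. -/

import Mathlib

noncomputable section

/-- We work with ordinals in universe 0. -/
abbrev Ordl : Type 1 := Ordinal.{0}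

/-- Reverse ordinal sum: `revSum d k = d (k-1) + ⋯ + d 0` (and `0` for `k = 0`). -/
def revSum (d : ℕ → Ordl) : ℕ → Ordl
  | 0 => 0
  | k + 1 => d k + revSum d k

/-- An abstract entailment system: antecedents, consequents, models, the two
satisfaction relations, and finite sets of trace values for antecedents and
consequents (drawn from the disjoint types `TA` and `TC`). -/
structure CES where
  A : Type
  C : Type
  M : Type
  TA : Type
  TC : Type
  satA : M → A → Prop
  satC : M → C → Prop
  tvA : A → Finset TA
  tvC : C → Finset TC

/-- Validity of a sequent `A ⊢ C`: every model of the antecedent satisfies the consequent. -/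
def CES.Valid (S : CES) (s : S.A × S.C) : Prop :=
  ∀ m : S.M, S.satA m s.1 → S.satC m s.2

/-- A cyclic pre-proof: a finite directed graph whose nodes carry sequents and
(ordered) lists of children, together with the trace pair functions `δ1` (on
antecedent trace values) and `δ2` (on consequent trace values) attached to the
rule instance at each node/premise.  `δ1`/`δ2` are partial (Option-valued) and
only defined along edges, on trace values of the respective sequents. -/
structure PreProof (S : CES) where
  Node : Type
  [fintypeNode : Fintype Node]
  [decEqNode : DecidableEq Node]
  seqOf : Node → S.A × S.C
  children : Node → List Node
  δ1 : Node → Node → S.TA → S.TA → Option Ordl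
  δ2 : Node → Node → S.TC → S.TC → Option Ordl
  δ1_dom : ∀ ν ν' τ τ', (δ1 ν ν' τ τ').isSome →
    ν' ∈ children ν ∧ τ ∈ S.tvA (seqOf ν).1 ∧ τ' ∈ S.tvA (seqOf ν').1
  δ2_dom : ∀ ν ν' τ τ', (δ2 ν ν' τ τ').isSome →
    ν' ∈ children ν ∧ τ ∈ S.tvC (seqOf ν).2 ∧ τ' ∈ S.tvC (seqOf ν').2

attribute [instance] PreProof.fintypeNode PreProof.decEqNode

/-- An ordinal trace function: partial ordinal-valued functions on
(antecedent resp. consequent) trace value/model pairs, defined at least on all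
`(τ, m)` with `τ ∈ tvA A` and `m ⊨ A`. -/
structure OTF (S : CES) where
  OA : S.TA → S.M → Option Ordl
  OC : S.TC → S.M → Option Ordl
  definedA : ∀ (a : S.A) (τ : S.TA) (m : S.M),
    τ ∈ S.tvA a → S.satA m a → (OA τ m).isSome

/-- `1̲`: the least value taken by the ordinal trace function. -/
def OTF.leastVal {S : CES} (O : OTF S) : Ordl :=
  sInf {o : Ordl | (∃ τ m, O.OA τ m = some o) ∨ (∃ τ m, O.OC τ m = some o)}

/-- A sequent `s` equates trace values `τa` and `τc`: whenever `s` is valid,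
every model of the antecedent realizing `τc` realizes `τa` with the same size. -/
def OTF.Equates {S : CES} (O : OTF S) (s : S.A × S.C) (τa : S.TA) (τc : S.TC) : Prop :=
  S.Valid s → ∀ m : S.M, S.satA m s.1 →
    ∀ o : Ordl, O.OC τc m = some o → O.OA τa m = some o

namespace PreProof

variable {S : CES}

/-- A node is axiomatic when its rule instance has no premises. -/
def Axiomatic (P : PreProof S) (ν : P.Node) : Prop := P.children ν = []

/-- `νs 0, …, νs (n-1)` is a (finite) path in the pre-proof. -/
def IsPath (P : PreProof S) (n : ℕ) (νs : ℕ → P.Node) : Prop :=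
  ∀ i, i + 1 < n → νs (i + 1) ∈ P.children (νs i)

/-- An infinite path in the pre-proof. -/
def InfPath (P : PreProof S) (νs : ℕ → P.Node) : Prop :=
  ∀ i, νs (i + 1) ∈ P.children (νs i)

/-- A left-hand trace `τs 0, …, τs (k-1)` follows (an initial segment of) the
path `νs 0, …, νs (n-1)`. -/
def FollowsL (P : PreProof S) (n : ℕ) (νs : ℕ → P.Node) (k : ℕ) (τs : ℕ → S.TA) : Prop :=
  k ≤ n ∧ (∀ i < k, τs i ∈ S.tvA (P.seqOf (νs i)).1) ∧
    ∀ i, i + 1 < k → (P.δ1 (νs i) (νs (i + 1)) (τs i) (τs (i + 1))).isSome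

/-- A right-hand trace `τs 0, …, τs (k-1)` follows (an initial segment of) the
path `νs 0, …, νs (n-1)`. -/
def FollowsR (P : PreProof S) (n : ℕ) (νs : ℕ → P.Node) (k : ℕ) (τs : ℕ → S.TC) : Prop :=
  k ≤ n ∧ (∀ i < k, τs i ∈ S.tvC (P.seqOf (νs i)).2) ∧
    ∀ i, i + 1 < k → (P.δ2 (νs i) (νs (i + 1)) (τs i) (τs (i + 1))).isSome

/-- The `δ1`-value of the `i`-th step of a left-hand trace along a path. -/
def stepL (P : PreProof S) (νs : ℕ → P.Node) (τs : ℕ → S.TA) (i : ℕ) : Ordl :=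
  (P.δ1 (νs i) (νs (i + 1)) (τs i) (τs (i + 1))).getD 0

/-- The `δ2`-value of the `i`-th step of a right-hand trace along a path. -/
def stepR (P : PreProof S) (νs : ℕ → P.Node) (τs : ℕ → S.TC) (i : ℕ) : Ordl :=
  (P.δ2 (νs i) (νs (i + 1)) (τs i) (τs (i + 1))).getD 0

/-- Size `Θ` of a left-hand trace of length `k` along a path: the *reverse*
ordinal sum `δ1(τ_{k-2},τ_{k-1}) + ⋯ + δ1(τ_0,τ_1)`. -/
def thetaL (P : PreProof S) (νs : ℕ → P.Node) (τs : ℕ → S.TA) (k : ℕ) : Ordl :=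
  revSum (P.stepL νs τs) (k - 1)

/-- Size `Θ` of a right-hand trace of length `k` along a path (reverse sum). -/
def thetaR (P : PreProof S) (νs : ℕ → P.Node) (τs : ℕ → S.TC) (k : ℕ) : Ordl :=
  revSum (P.stepR νs τs) (k - 1)

/-- The global soundness condition: every infinite path has a tail followed by
an infinitely progressing left-hand trace. -/
def GlobalSound (P : PreProof S) : Prop :=
  ∀ νs : ℕ → P.Node, P.InfPath νs →
    ∃ (k : ℕ) (τs : ℕ → S.TA),
      (∀ i, (P.δ1 (νs (k + i)) (νs (k + i + 1)) (τs i) (τs (i + 1))).isSome) ∧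
      ∀ N, ∃ i, N ≤ i ∧
        ∃ α : Ordl, P.δ1 (νs (k + i)) (νs (k + i + 1)) (τs i) (τs (i + 1)) = some α ∧ 0 < α

/-- A (valid) cyclic proof: a pre-proof satisfying the global soundness
condition; consequently (and we record it as part of the notion) all sequents
occurring in it are valid. -/
def IsCyclicProof (P : PreProof S) : Prop :=
  P.GlobalSound ∧ ∀ ν : P.Node, S.Valid (P.seqOf ν)

/-- The descending counter-model property of an ordinal trace function. -/
def DCM (P : PreProof S) (O : OTF S) : Prop :=
  ∀ (ν : P.Node) (m : S.M),
    S.satA m (P.seqOf ν).1 → ¬ S.satC m (P.seqOf ν).2 →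
    ∃ ν' ∈ P.children ν, ∃ m' : S.M,
      S.satA m' (P.seqOf ν').1 ∧ ¬ S.satC m' (P.seqOf ν').2 ∧
      ∀ (τ τ' : S.TA) (α : Ordl), P.δ1 ν ν' τ τ' = some α →
        ∀ o : Ordl, O.OA τ m = some o →
          ∃ o' : Ordl, O.OA τ' m' = some o' ∧ o' + α ≤ o

/-- A right-hand trace value is terminal for a node when it has no successor
trace value towards any premise. -/
def TerminalR (P : PreProof S) (ν : P.Node) (σ : S.TC) : Prop :=
  ∀ ν' ∈ P.children ν, ∀ σ', P.δ2 ν ν' σ σ' = none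

/-- Defining property of the exclusion predicate: a rule instance (node)
excludes a consequent trace value only if no model of the antecedent realizes
it. -/
def ExclOK (P : PreProof S) (O : OTF S) (Excl : P.Node → S.TC → Prop) : Prop :=
  ∀ (ν : P.Node) (σ : S.TC), Excl ν σ →
    ∀ m : S.M, S.satA m (P.seqOf ν).1 → O.OC σ m = none

/-- A consequent trace value is ground w.r.t. a node: if the node's sequent is
valid then the value is realized only with the least possible size. -/
def Ground (P : PreProof S) (O : OTF S) (ν : P.Node) (σ : S.TC) : Prop :=
  S.Valid (P.seqOf ν) → ∀ m : S.M, S.satA m (P.seqOf ν).1 →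
    ∀ o : Ordl, O.OC σ m = some o → o = O.leastVal

/-- The trace value ordering relation `τ2 ∼^ν_P τ1` (`∼` is `<` when
`strict = true` and `≤` otherwise). -/
def TVO (P : PreProof S) (O : OTF S) (Excl : P.Node → S.TC → Prop) (strict : Bool)
    (ν0 : P.Node) (τ1 : S.TA) (τ2 : S.TC) : Prop :=
  ∀ (n : ℕ) (νs : ℕ → P.Node) (τs : ℕ → S.TC),
    1 ≤ n → P.IsPath n νs → νs 0 = ν0 → τs 0 = τ2 →
    P.FollowsR n νs n τs →
    P.TerminalR (νs (n - 1)) (τs (n - 1)) →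
    ¬ Excl (νs (n - 1)) (τs (n - 1)) →
    ∃ (k : ℕ) (τs' : ℕ → S.TA),
      1 ≤ k ∧ k ≤ n ∧ τs' 0 = τ1 ∧ P.FollowsL n νs k τs' ∧
      (if strict then P.thetaR νs τs n < P.thetaL νs τs' k
        else P.thetaR νs τs n ≤ P.thetaL νs τs' k) ∧
      (P.Ground O (νs (n - 1)) (τs (n - 1)) ∨
        (P.Axiomatic (νs (n - 1)) ∧ k = n ∧
          O.Equates (P.seqOf (νs (n - 1))) (τs' (n - 1)) (τs (n - 1))))

/-- The descending model property of an ordinal trace function. -/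
def DMP (P : PreProof S) (O : OTF S) : Prop :=
  ∀ ν : P.Node, P.children ν ≠ [] →
    S.Valid (P.seqOf ν) → (∀ ν' ∈ P.children ν, S.Valid (P.seqOf ν')) →
    ∀ τ1 ∈ S.tvA (P.seqOf ν).1, ∀ τ2 ∈ S.tvC (P.seqOf ν).2,
    ∀ m : S.M, S.satA m (P.seqOf ν).1 →
    ∃ ν' ∈ P.children ν, ∃ m' : S.M,
      S.satA m' (P.seqOf ν').1 ∧
      (P.TerminalR ν τ2 ∨ ∃ σ', (P.δ2 ν ν' τ2 σ').isSome) ∧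
      (∀ (σ' : S.TA) (α : Ordl), P.δ1 ν ν' τ1 σ' = some α →
        ∀ o : Ordl, O.OA τ1 m = some o →
          ∃ o' : Ordl, O.OA σ' m' = some o' ∧ o' + α ≤ o) ∧
      (∀ (σ' : S.TC) (α : Ordl), P.δ2 ν ν' τ2 σ' = some α →
        ∀ o : Ordl, O.OC τ2 m = some o →
          ∃ o' : Ordl, O.OC σ' m' = some o' ∧ o ≤ o' + α)

/-- A sequence of models supports a left-hand trace along a path. -/
def SupportsL (P : PreProof S) (O : OTF S) (n : ℕ) (νs : ℕ → P.Node) (k : ℕ)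
    (τs : ℕ → S.TA) (ms : ℕ → S.M) : Prop :=
  P.FollowsL n νs k τs ∧
    (∀ i < k, S.satA (ms i) (P.seqOf (νs i)).1 ∧ (O.OA (τs i) (ms i)).isSome) ∧
    ∀ j, j + 1 < k → ∀ o o' : Ordl, O.OA (τs j) (ms j) = some o →
      O.OA (τs (j + 1)) (ms (j + 1)) = some o' →
      o' + P.stepL νs τs j ≤ o

/-- A sequence of models supports a right-hand trace along a path. -/
def SupportsR (P : PreProof S) (O : OTF S) (n : ℕ) (νs : ℕ → P.Node) (k : ℕ)
    (τs : ℕ → S.TC) (ms : ℕ → S.M) : Prop :=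
  P.FollowsR n νs k τs ∧
    (∀ i < k, S.satC (ms i) (P.seqOf (νs i)).2 ∧ (O.OC (τs i) (ms i)).isSome) ∧
    ∀ j, j + 1 < k → ∀ o o' : Ordl, O.OC (τs j) (ms j) = some o →
      O.OC (τs (j + 1)) (ms (j + 1)) = some o' →
      o ≤ o' + P.stepR νs τs j

/-- `(ν', τ')` is reachable from `(ν, τ)` on the left. -/
def ReachL (P : PreProof S) (ν : P.Node) (τ : S.TA) (ν' : P.Node) (τ' : S.TA) : Prop :=
  ∃ (n : ℕ) (νs : ℕ → P.Node) (τs : ℕ → S.TA),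
    1 ≤ n ∧ P.IsPath n νs ∧ P.FollowsL n νs n τs ∧
    νs 0 = ν ∧ τs 0 = τ ∧ νs (n - 1) = ν' ∧ τs (n - 1) = τ'

/-- `(ν', τ')` is reachable from `(ν, τ)` on the right. -/
def ReachR (P : PreProof S) (ν : P.Node) (τ : S.TC) (ν' : P.Node) (τ' : S.TC) : Prop :=
  ∃ (n : ℕ) (νs : ℕ → P.Node) (τs : ℕ → S.TC),
    1 ≤ n ∧ P.IsPath n νs ∧ P.FollowsR n νs n τs ∧
    νs 0 = ν ∧ τs 0 = τ ∧ νs (n - 1) = ν' ∧ τs (n - 1) = τ'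

/-- A left cycle along a path. -/
def IsCycleL (P : PreProof S) (n : ℕ) (νs : ℕ → P.Node) (τs : ℕ → S.TA) : Prop :=
  2 ≤ n ∧ P.IsPath n νs ∧ P.FollowsL n νs n τs ∧ νs (n - 1) = νs 0 ∧ τs (n - 1) = τs 0

/-- A right cycle along a path. -/
def IsCycleR (P : PreProof S) (n : ℕ) (νs : ℕ → P.Node) (τs : ℕ → S.TC) : Prop :=
  2 ≤ n ∧ P.IsPath n νs ∧ P.FollowsR n νs n τs ∧ νs (n - 1) = νs 0 ∧ τs (n - 1) = τs 0

/-- A simple left cycle. -/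
def IsSimpleCycleL (P : PreProof S) (n : ℕ) (νs : ℕ → P.Node) (τs : ℕ → S.TA) : Prop :=
  P.IsCycleL n νs τs ∧
    ∀ i j, 1 ≤ i → i < j → j ≤ n - 1 → ¬ (νs i = νs j ∧ τs i = τs j)

/-- A simple right cycle. -/
def IsSimpleCycleR (P : PreProof S) (n : ℕ) (νs : ℕ → P.Node) (τs : ℕ → S.TC) : Prop :=
  P.IsCycleR n νs τs ∧
    ∀ i j, 1 ≤ i → i < j → j ≤ n - 1 → ¬ (νs i = νs j ∧ τs i = τs j)

/-- A simple left binary cycle. -/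
def IsSimpleBinCycleL (P : PreProof S) (n : ℕ) (νs : ℕ → P.Node)
    (τs τs' : ℕ → S.TA) : Prop :=
  P.IsCycleL n νs τs ∧ P.IsCycleL n νs τs' ∧
    ∀ i j, 1 ≤ i → i < j → j ≤ n - 1 →
      ¬ (νs i = νs j ∧ τs i = τs j ∧ τs' i = τs' j)

/-- `P` is left finitely progressing w.r.t. `(ν0, τ0)`. -/
def FinProgL (P : PreProof S) (ν0 : P.Node) (τ0 : S.TA) : Prop :=
  ∀ (ν1 ν2 : P.Node) (τ1 τ2 : S.TA) (α : Ordl),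
    P.ReachL ν0 τ0 ν1 τ1 → P.δ1 ν1 ν2 τ1 τ2 = some α → α < Ordinal.omega0

/-- `P` is right finitely progressing w.r.t. `(ν0, τ0)`. -/
def FinProgR (P : PreProof S) (ν0 : P.Node) (τ0 : S.TC) : Prop :=
  ∀ (ν1 ν2 : P.Node) (τ1 τ2 : S.TC) (α : Ordl),
    P.ReachR ν0 τ0 ν1 τ1 → P.δ2 ν1 ν2 τ1 τ2 = some α → α < Ordinal.omega0

/-- `P` is dynamic w.r.t. `ν0`, `τA`, `τC`: every reachable left or right
simple cycle has strictly positive size. -/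
def Dynamic (P : PreProof S) (ν0 : P.Node) (τA : S.TA) (τC : S.TC) : Prop :=
  (∀ (n : ℕ) (νs : ℕ → P.Node) (τs : ℕ → S.TA), P.IsSimpleCycleL n νs τs →
    P.ReachL ν0 τA (νs 0) (τs 0) → 0 < P.thetaL νs τs n) ∧
  (∀ (n : ℕ) (νs : ℕ → P.Node) (τs : ℕ → S.TC), P.IsSimpleCycleR n νs τs →
    P.ReachR ν0 τC (νs 0) (τs 0) → 0 < P.thetaR νs τs n)

/-- `P` is balanced w.r.t. `(ν0, τA)`: the two components of every reachable
simple left binary cycle have equal size. -/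
def Balanced (P : PreProof S) (ν0 : P.Node) (τA : S.TA) : Prop :=
  ∀ (n : ℕ) (νs : ℕ → P.Node) (τs τs' : ℕ → S.TA), P.IsSimpleBinCycleL n νs τs τs' →
    P.ReachL ν0 τA (νs 0) (τs 0) → P.ReachL ν0 τA (νs 0) (τs' 0) →
    P.thetaL νs τs n = P.thetaL νs τs' n

/-- The trace width `W(P)`. -/
def traceWidth (P : PreProof S) : ℕ :=
  Finset.univ.sup fun ν : P.Node =>
    max (S.tvA (P.seqOf ν).1).card (S.tvC (P.seqOf ν).2).card

/-- The (binary left-hand) cycle threshold `C(P)`: the number of triples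
`(σ, σ', μ)` with `σ, σ' ∈ TraceVals_A(μ)`. -/
def cycThreshold (P : PreProof S) : ℕ :=
  ∑ ν : P.Node, (S.tvA (P.seqOf ν).1).card * (S.tvA (P.seqOf ν).1).card

/-- `maxStep(P)`: the maximum (finite) `δ1`-value over the edges of `P`. -/
def maxStepN (P : PreProof S) : ℕ :=
  sSup {k : ℕ | ∃ ν ν' τ τ', P.δ1 ν ν' τ τ' = some (k : Ordl)}

/-- The in-degree of the proof graph. -/
def inDeg (P : PreProof S) : ℕ :=
  Finset.univ.sup fun ν' : P.Node =>
    (Finset.univ.filter fun ν : P.Node => ν' ∈ P.children ν).card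

/-- The trace pair function of `P` is trace injective. -/
def TraceInjective (P : PreProof S) : Prop :=
  (∀ (ν ν' : P.Node) (τ τ' τ'' : S.TA),
    (P.δ1 ν ν' τ τ'').isSome → (P.δ1 ν ν' τ' τ'').isSome → τ = τ') ∧
  (∀ (ν ν' : P.Node) (σ σ' σ'' : S.TC),
    (P.δ2 ν ν' σ σ'').isSome → (P.δ2 ν ν' σ' σ'').isSome → σ = σ')

/-- `T_ν(σ)`: the set of antecedent trace values of `ν` equated to `σ`
by the sequent of `ν`. -/
def Tset (P : PreProof S) (O : OTF S) (ν : P.Node) (σ : S.TC) : Set S.TA :=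
  {τ : S.TA | τ ∈ S.tvA (P.seqOf ν).1 ∧ O.Equates (P.seqOf ν) τ σ}

end PreProof

/-! ### Weighted automata over the ordinal max-plus semiring -/

/-- The alphabet `Σ_P`. -/
abbrev Sig {S : CES} (P : PreProof S) : Type := P.Node ⊕ (Set S.TA × S.TC)

/-- States of the antecedent automata (`⊤ⁱ_μ` states are used only by the
approximate automata). -/
inductive AState (Node TA : Type) : Type
  | init : AState Node TA
  | pair : Node → TA → AState Node TA
  | bot : AState Node TA
  | top : AState Node TA
  | topn : Node → ℕ → AState Node TA

instance {Node TA : Type} : Inhabited (AState Node TA) := ⟨AState.init⟩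

/-- States of the consequent automaton. -/
inductive BState (Node TC : Type) : Type
  | init : BState Node TC
  | pair : Node → TC → BState Node TC
  | bot : BState Node TC

instance {Node TC : Type} : Inhabited (BState Node TC) := ⟨BState.init⟩

/-- Transition relation of the (full) antecedent automaton `𝒜^{(P,ν0)}_{(τ1,·)}`. -/
inductive ATrans {S : CES} (P : PreProof S) (O : OTF S) (ν0 : P.Node) (τ1 : S.TA) :
    AState P.Node S.TA → Sig P → AState P.Node S.TA → Prop
  | start : ATrans P O ν0 τ1 .init (Sum.inl ν0) (.pair ν0 τ1)
  | step {μ μ' : P.Node} {σ σ' : S.TA} (h1 : μ' ∈ P.children μ)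
      (h2 : (P.δ1 μ μ' σ σ').isSome) :
      ATrans P O ν0 τ1 (.pair μ σ) (Sum.inl μ') (.pair μ' σ')
  | toBot {μ : P.Node} {σ : S.TA} {σ' : S.TC} (h1 : P.Axiomatic μ)
      (h2 : σ' ∈ S.tvC (P.seqOf μ).2) (h3 : σ ∈ P.Tset O μ σ') :
      ATrans P O ν0 τ1 (.pair μ σ) (Sum.inr (P.Tset O μ σ', σ')) .bot
  | toTop {μ μ' : P.Node} {σ : S.TA} (h : μ' ∈ P.children μ) :
      ATrans P O ν0 τ1 (.pair μ σ) (Sum.inl μ') .top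
  | topLoop (μ : P.Node) : ATrans P O ν0 τ1 .top (Sum.inl μ) .top

/-- Transition relation of the approximate antecedent automaton `𝒜(n)^{(P,ν0)}_{(τ1,·)}`. -/
inductive ATransN {S : CES} (P : PreProof S) (O : OTF S) (n : ℕ) (ν0 : P.Node) (τ1 : S.TA) :
    AState P.Node S.TA → Sig P → AState P.Node S.TA → Prop
  | start : ATransN P O n ν0 τ1 .init (Sum.inl ν0) (.pair ν0 τ1)
  | step {μ μ' : P.Node} {σ σ' : S.TA} (h1 : μ' ∈ P.children μ)
      (h2 : (P.δ1 μ μ' σ σ').isSome) :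
      ATransN P O n ν0 τ1 (.pair μ σ) (Sum.inl μ') (.pair μ' σ')
  | toBot {μ : P.Node} {σ : S.TA} {σ' : S.TC} (h1 : P.Axiomatic μ)
      (h2 : σ' ∈ S.tvC (P.seqOf μ).2) (h3 : σ ∈ P.Tset O μ σ') :
      ATransN P O n ν0 τ1 (.pair μ σ) (Sum.inr (P.Tset O μ σ', σ')) .bot
  | toTopn {μ μ' : P.Node} {σ : S.TA} (h : μ' ∈ P.children μ) :
      ATransN P O n ν0 τ1 (.pair μ σ) (Sum.inl μ') (.topn μ' 1)
  | topnStay {μ μ' : P.Node} {i : ℕ} (h1 : 0 < i) (h2 : i ≤ n) (h3 : μ' ≠ μ) :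
      ATransN P O n ν0 τ1 (.topn μ i) (Sum.inl μ') (.topn μ i)
  | topnStep {μ : P.Node} {i : ℕ} (h1 : 0 < i) (h2 : i < n) :
      ATransN P O n ν0 τ1 (.topn μ i) (Sum.inl μ) (.topn μ (i + 1))

/-- Transition relation of the consequent automaton `ℬ^{(P,ν0)}_{(·,τ2)}`. -/
inductive BTrans {S : CES} (P : PreProof S) (O : OTF S) (Excl : P.Node → S.TC → Prop)
    (ν0 : P.Node) (τ2 : S.TC) :
    BState P.Node S.TC → Sig P → BState P.Node S.TC → Prop
  | start : BTrans P O Excl ν0 τ2 .init (Sum.inl ν0) (.pair ν0 τ2)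
  | step {μ μ' : P.Node} {σ σ' : S.TC} (h1 : μ' ∈ P.children μ)
      (h2 : (P.δ2 μ μ' σ σ').isSome) :
      BTrans P O Excl ν0 τ2 (.pair μ σ) (Sum.inl μ') (.pair μ' σ')
  | toBot {μ : P.Node} {σ : S.TC} (h1 : P.Axiomatic μ) (h2 : σ ∈ S.tvC (P.seqOf μ).2)
      (h3 : ¬ P.Ground O μ σ) (h4 : ¬ Excl μ σ) :
      BTrans P O Excl ν0 τ2 (.pair μ σ) (Sum.inr (P.Tset O μ σ, σ)) .bot

/-- Weight function of the antecedent automata (the only potentially non-zero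
weights sit on pair-to-pair transitions, where they are given by `δ1`). -/
def Awt {S : CES} (P : PreProof S) :
    AState P.Node S.TA → Sig P → AState P.Node S.TA → Ordl
  | .pair μ σ, _, .pair μ' σ' => (P.δ1 μ μ' σ σ').getD 0
  | _, _, _ => 0

/-- Weight function of the consequent automaton. -/
def Bwt {S : CES} (P : PreProof S) :
    BState P.Node S.TC → Sig P → BState P.Node S.TC → Ordl
  | .pair μ σ, _, .pair μ' σ' => (P.δ2 μ μ' σ σ').getD 0
  | _, _, _ => 0

/-- `q` is a run over the word `σ 0, …, σ (m-1)` (from the initial state `q0`). -/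
def IsRun {Q A : Type*} (T : Q → A → Q → Prop) (q0 : Q) (m : ℕ) (σ : ℕ → A)
    (q : ℕ → Q) : Prop :=
  q 0 = q0 ∧ ∀ i < m, T (q i) (σ i) (q (i + 1))

/-- The value of a run: the `⊗`-product (i.e. reverse ordinal sum) of the
weights of its transitions. -/
def runVal {Q A : Type*} (wt : Q → A → Q → Ordl) (m : ℕ) (σ : ℕ → A) (q : ℕ → Q) : Ordl :=
  revSum (fun i => wt (q i) (σ i) (q (i + 1))) m

/-- The quantitative language of a weighted automaton: `⊥` (i.e. `none`) if the
word admits no accepting run, and otherwise the supremum (maximum) of the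
values of its accepting runs. -/
def Lang {Q A : Type*} (T : Q → A → Q → Prop) (q0 : Q) (F : Q → Prop)
    (wt : Q → A → Q → Ordl) (m : ℕ) (σ : ℕ → A) : Option Ordl := by
  classical
  exact if (∃ q : ℕ → Q, IsRun T q0 m σ q ∧ F (q m)) then
    some (sSup {v : Ordl | ∃ q : ℕ → Q, IsRun T q0 m σ q ∧ F (q m) ∧ v = runVal wt m σ q})
  else none

/-- Ordering of quantitative language values, with `⊥ = none` below everything. -/
def OptLE : Option Ordl → Option Ordl → Prop
  | none, _ => True
  | some _, none => False
  | some a, some b => a ≤ b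

/-- Strict ordering of quantitative language values on defined (non-`⊥`) values. -/
def OptLT : Option Ordl → Option Ordl → Prop
  | none, _ => True
  | some _, none => False
  | some a, some b => a < b

/-- `∼` on language values: `<` when `strict`, else `≤`. -/
def OptOrd (strict : Bool) : Option Ordl → Option Ordl → Prop :=
  fun x y => if strict then OptLT x y else OptLE x y

/-- Final states of the antecedent automata: all non-initial states. -/
def AFinal {Node TA : Type} : AState Node TA → Prop := fun q => q ≠ .init

/-- Final states of the consequent automaton. -/
def BFinal {S : CES} (P : PreProof S) (O : OTF S) (Excl : P.Node → S.TC → Prop) :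
    BState P.Node S.TC → Prop
  | .init => False
  | .bot => True
  | .pair μ σ => ¬ Excl μ σ ∧
      ((¬ P.Axiomatic μ ∧ P.TerminalR μ σ) ∨ (P.Axiomatic μ ∧ P.Ground O μ σ))

/-- The quantitative language of `𝒜^{(P,ν0)}_{(τ1,τ2)}` (it does not depend on `τ2`). -/
def LangA {S : CES} (P : PreProof S) (O : OTF S) (ν0 : P.Node) (τ1 : S.TA) :
    ℕ → (ℕ → Sig P) → Option Ordl :=
  Lang (ATrans P O ν0 τ1) .init AFinal (Awt P)

/-- The quantitative language of `𝒜(n)^{(P,ν0)}_{(τ1,τ2)}`. -/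
def LangAN {S : CES} (P : PreProof S) (O : OTF S) (n : ℕ) (ν0 : P.Node) (τ1 : S.TA) :
    ℕ → (ℕ → Sig P) → Option Ordl :=
  Lang (ATransN P O n ν0 τ1) .init AFinal (Awt P)

/-- The quantitative language of `ℬ^{(P,ν0)}_{(τ1,τ2)}` (it does not depend on `τ1`). -/
def LangB {S : CES} (P : PreProof S) (O : OTF S) (Excl : P.Node → S.TC → Prop)
    (ν0 : P.Node) (τ2 : S.TC) : ℕ → (ℕ → Sig P) → Option Ordl :=
  Lang (BTrans P O Excl ν0 τ2) .init (BFinal P O Excl) (Bwt P)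

/-- The automaton `ℬ^{(P,ν0)}_{(·,τ2)}` is grounded: every reachable final pair
state carries a trace value that is ground w.r.t. its node. -/
def BGrounded {S : CES} (P : PreProof S) (O : OTF S) (Excl : P.Node → S.TC → Prop)
    (ν0 : P.Node) (τ2 : S.TC) : Prop :=
  ∀ (μ : P.Node) (σ : S.TC),
    (∃ (m : ℕ) (w : ℕ → Sig P) (q : ℕ → BState P.Node S.TC),
      IsRun (BTrans P O Excl ν0 τ2) .init m w q ∧ q m = .pair μ σ ∧
        BFinal P O Excl (.pair μ σ)) →
    P.Ground O μ σ

/-- Collapse the graded sink states of an approximate automaton onto `⊤`. -/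
def collapseTop {Node TA : Type} : AState Node TA → AState Node TA
  | .topn _ _ => .top
  | q => q

/-- The number of occurrences of the letter `a` among `σ lo, …, σ (hi - 1)`. -/
def cnt {A : Type*} (σ : ℕ → A) (a : A) (lo hi : ℕ) : ℕ := by
  classical
  exact ((Finset.Ico lo hi).filter fun t => σ t = a).card

/-- The set of runs (as lists of states) of an automaton on a word. -/
def RunsOn {Q A : Type*} [Inhabited Q] (T : Q → A → Q → Prop) (q0 : Q)
    (w : List A) : Set (List Q) :=
  {l : List Q | l.length = w.length + 1 ∧ l.getD 0 default = q0 ∧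
    ∀ i, ∀ h : i < w.length, T (l.getD i default) (w.get ⟨i, h⟩) (l.getD (i + 1) default)}

end

section Generic

def GWalk {X : Type*} (E : X → X → Prop) (n : ℕ) (x : ℕ → X) : Prop :=
  ∀ i < n, E (x i) (x (i + 1))

def wsum {X : Type*} (g : X → X → ℕ) (x : ℕ → X) (n : ℕ) : ℕ :=
  ∑ i ∈ Finset.range n, g (x i) (x (i + 1))

def gsplice {X : Type*} (x : ℕ → X) (p q : ℕ) : ℕ → X :=
  fun i => if i ≤ p then x i else x (i - p + q)

theorem wsum_succ {X : Type*} (g : X → X → ℕ) (x : ℕ → X) (n : ℕ) :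
    wsum g x (n + 1) = wsum g x n + g (x n) (x (n + 1)) := by
  simp [wsum, Finset.sum_range_succ]

theorem wsum_mono {X : Type*} (g : X → X → ℕ) (x : ℕ → X) {a b : ℕ} (h : a ≤ b) :
    wsum g x a ≤ wsum g x b := by
  induction b, h using Nat.le_induction with
  | base => exact le_rfl
  | succ n _ ih => rw [wsum_succ]; omega

theorem wsum_congr {X : Type*} (g : X → X → ℕ) (x y : ℕ → X) (n : ℕ)
    (h : ∀ i ≤ n, x i = y i) : wsum g x n = wsum g y n := by
  apply Finset.sum_congr rfl
  intro i hi
  have := Finset.mem_range.1 hi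
  rw [h i (by omega), h (i + 1) (by omega)]

theorem wsum_shift {X : Type*} (g : X → X → ℕ) (x : ℕ → X) (i r : ℕ) :
    wsum g x (i + r) = wsum g x i + wsum g (fun t => x (i + t)) r := by
  induction r with
  | zero => simp [wsum]
  | succ r ih => rw [← add_assoc, wsum_succ, ih, wsum_succ, add_assoc]; rfl

theorem wsum_le {X : Type*} (g : X → X → ℕ) (B : ℕ) (hB : ∀ a b, g a b ≤ B) (x : ℕ → X) (n : ℕ) :
    wsum g x n ≤ n * B := by
  induction n with
  | zero => simp [wsum]
  | succ n ih => rw [wsum_succ, add_mul, one_mul]; have := hB (x n) (x (n+1)); omega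

theorem gsplice_le {X : Type*} (x : ℕ → X) {p q i : ℕ} (h : i ≤ p) : gsplice x p q i = x i := by
  simp [gsplice, h]

theorem gsplice_add {X : Type*} (x : ℕ → X) {p q : ℕ} (h : x p = x q) (r : ℕ) :
    gsplice x p q (p + r) = x (q + r) := by
  rcases Nat.eq_zero_or_pos r with rfl | hr
  · simp [gsplice, h]
  · have : ¬ (p + r ≤ p) := by omega
    simp only [gsplice, this, if_false]
    congr 1; omega

theorem gsplice_walk {X : Type*} {E : X → X → Prop} {x : ℕ → X} {n p q : ℕ} (hw : GWalk E n x)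
    (h : x p = x q) (hp : p ≤ n) (hq : q ≤ n) : GWalk E (p + (n - q)) (gsplice x p q) := by
  intro i hi
  rcases lt_or_ge i p with hip | hip
  · rw [gsplice_le x (by omega), gsplice_le x (by omega)]
    exact hw i (by omega)
  · obtain ⟨r, rfl⟩ := Nat.exists_eq_add_of_le hip
    rw [gsplice_add x h, add_assoc, gsplice_add x h]
    exact hw (q + r) (by omega)

theorem gsplice_wsum {X : Type*} (g : X → X → ℕ) {x : ℕ → X} {p q : ℕ}
    (h : x p = x q) (r : ℕ) :
    wsum g (gsplice x p q) (p + r) + wsum g x q = wsum g x p + wsum g x (q + r) := by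
  induction r with
  | zero =>
    rw [add_zero, add_zero, wsum_congr g (gsplice x p q) x p (fun i hi => gsplice_le x hi)]
  | succ r ih =>
    rw [← add_assoc, ← add_assoc, wsum_succ, wsum_succ, gsplice_add x h, add_assoc p r 1,
      gsplice_add x h]
    rw [← add_assoc]; omega

def GSimple {X : Type*} (x : ℕ → X) (i j : ℕ) : Prop :=
  ∀ a b, i < a → a < b → b ≤ j → x a ≠ x b

/-- Every repeat contains a simple repeat. -/
theorem exists_simple {X : Type*} (x : ℕ → X) (i j : ℕ) (hij : i < j) (h : x i = x j) :
    ∃ a b, i ≤ a ∧ a < b ∧ b ≤ j ∧ x a = x b ∧ GSimple x a b := by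
  induction hd : j - i using Nat.strong_induction_on generalizing i j with
  | _ d ih =>
    by_cases hs : GSimple x i j
    · exact ⟨i, j, le_rfl, hij, le_rfl, h, hs⟩
    · unfold GSimple at hs
      push Not at hs
      obtain ⟨a, b, h1, h2, h3, h4⟩ := hs
      obtain ⟨a', b', k1, k2, k3, k4, k5⟩ := ih (b - a) (by omega) a b h2 h4 rfl
      exact ⟨a', b', by omega, k2, by omega, k4, k5⟩

theorem pos_cycle {X : Type*} (g : X → X → ℕ) (x : ℕ → X) (n : ℕ)
    (hpos : ∀ i j, i < j → j ≤ n → x i = x j → GSimple x i j → wsum g x i < wsum g x j)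
    (i j : ℕ) (hij : i < j) (hj : j ≤ n) (h : x i = x j) : wsum g x i < wsum g x j := by
  obtain ⟨a, b, h1, h2, h3, h4, h5⟩ := exists_simple x i j hij h
  have := hpos a b h2 (by omega) h4 h5
  have := wsum_mono g x h1
  have := wsum_mono g x h3
  omega

theorem many_cycles {X : Type*} (g : X → X → ℕ) (x : ℕ → X) (n : ℕ)
    (hpos : ∀ i j, i < j → j ≤ n → x i = x j → GSimple x i j → wsum g x i < wsum g x j)
    (s : X) (lo : ℕ) (c : ℕ) : ∀ (hi : ℕ) (T : Finset ℕ), hi ≤ n →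
    (∀ t ∈ T, lo ≤ t ∧ t ≤ hi ∧ x t = s) → T.card = c + 1 →
    wsum g x lo + c ≤ wsum g x hi := by
  induction c with
  | zero =>
    intro hi T hn hT hc
    obtain ⟨t, ht⟩ := Finset.card_pos.1 (by omega : 0 < T.card)
    have := hT t ht
    simpa using wsum_mono g x (by omega : lo ≤ hi)
  | succ c ih =>
    intro hi T hn hT hc
    have hne : T.Nonempty := Finset.card_pos.1 (by omega)
    have hmem := T.max'_mem hne
    set m := T.max' hne with hm
    have hne2 : (T.erase m).Nonempty := Finset.card_pos.1 (by
      rw [Finset.card_erase_of_mem hmem]; omega)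
    have hmem2 := (T.erase m).max'_mem hne2
    set m2 := (T.erase m).max' hne2 with hm2
    have h2T : m2 ∈ T := Finset.mem_of_mem_erase hmem2
    have hlt : m2 < m := lt_of_le_of_ne (T.le_max' _ h2T) (Finset.ne_of_mem_erase hmem2)
    have a1 := hT m hmem
    have a2 := hT m2 h2T
    have := ih m2 (T.erase m) (by omega) (fun t ht =>
      ⟨(hT t (Finset.mem_of_mem_erase ht)).1, Finset.le_max' _ _ ht,
        (hT t (Finset.mem_of_mem_erase ht)).2.2⟩) (by rw [Finset.card_erase_of_mem hmem]; omega)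
    have h3 := pos_cycle g x n hpos m2 m hlt (by omega) (by rw [a1.2.2, a2.2.2])
    have := wsum_mono g x a1.2.1
    omega

theorem balanced_bound {X : Type*} (E : X → X → Prop) (g1 g2 : X → X → ℕ) (x0 : X) (F : Finset X)
    (B : ℕ) (hB : ∀ a b, g1 a b ≤ B)
    (hF : ∀ n x, GWalk E n x → x 0 = x0 → ∀ i ≤ n, x i ∈ F)
    (H : ∀ n x, GWalk E n x → x 0 = x0 → ∀ i j, i < j → j ≤ n → x i = x j → GSimple x i j →
      wsum g1 x j + wsum g2 x i = wsum g1 x i + wsum g2 x j)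
    (n : ℕ) : ∀ x, GWalk E n x → x 0 = x0 → wsum g1 x n ≤ wsum g2 x n + F.card * B := by
  induction n using Nat.strong_induction_on with
  | _ n ih =>
    intro x hw h0
    by_cases hr : ∃ i j, i < j ∧ j ≤ n ∧ x i = x j
    · obtain ⟨i, j, hij, hj, hx⟩ := hr
      obtain ⟨a, b, h1, h2, h3, h4, h5⟩ := exists_simple x i j hij hx
      have e := H n x hw h0 a b h2 (by omega) h4 h5
      have := ih (a + (n - b)) (by omega) (gsplice x a b)
        (gsplice_walk hw h4 (by omega) (by omega)) (by rw [gsplice_le x (Nat.zero_le _), h0])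
      have e1 := gsplice_wsum g1 h4 (n - b)
      have e2 := gsplice_wsum g2 h4 (n - b)
      rw [show b + (n - b) = n by omega] at e1 e2
      omega
    · push Not at hr
      have hc : n + 1 ≤ F.card := by
        have := Finset.card_le_card_of_injOn (s := Finset.range (n + 1)) (t := F) x
          (fun i hi => hF n x hw h0 i (by have := Finset.mem_range.1 hi; omega))
          (by
            intro a ha b hb hab
            have ha := Finset.mem_range.1 ha
            have hb := Finset.mem_range.1 hb
            rcases lt_trichotomy a b with h | h | h
            · exact absurd hab (hr a b h (by omega))
            · exact h
            · exact absurd hab.symm (hr b a h (by omega)))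
        simpa using this
      have := wsum_le g1 B hB x n
      have : n * B ≤ F.card * B := Nat.mul_le_mul_right _ (by omega)
      omega

open Classical in
noncomputable def onat (o : Ordl) : ℕ := if h : ∃ n : ℕ, o = n then h.choose else 0

theorem onat_spec {o : Ordl} (h : o < Ordinal.omega0) : o = (onat o : Ordl) := by
  have h' : ∃ n : ℕ, o = n := Ordinal.lt_omega0.1 h
  unfold onat
  rw [dif_pos h']
  exact h'.choose_spec

theorem revSum_cast (d : ℕ → Ordl) (v : ℕ → ℕ) (k : ℕ) (h : ∀ i < k, d i = (v i : Ordl)) :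
    revSum d k = ((∑ i ∈ Finset.range k, v i : ℕ) : Ordl) := by
  induction k with
  | zero => simp [revSum]
  | succ k ih =>
    rw [revSum, ih (fun i hi => h i (by omega)), h k (by omega), Finset.sum_range_succ, add_comm,
      Nat.cast_add, ← Nat.cast_add]

theorem revSum_congr (d e : ℕ → Ordl) (k : ℕ) (h : ∀ i < k, d i = e i) :
    revSum d k = revSum e k := by
  induction k with
  | zero => rfl
  | succ k ih => rw [revSum, revSum, ih (fun i hi => h i (by omega)), h k (by omega)]

theorem revSum_shift (d : ℕ → Ordl) (h : d 0 = 0) (k : ℕ) :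
    revSum d (k + 1) = revSum (fun i => d (i + 1)) k := by
  induction k with
  | zero => simp [revSum, h]
  | succ k ih => rw [revSum, ih]; rfl

theorem revSum_tail (d : ℕ → Ordl) (k m : ℕ) (hkm : k ≤ m) (h : ∀ i, k ≤ i → i < m → d i = 0) :
    revSum d m = revSum d k := by
  induction m, hkm using Nat.le_induction with
  | base => rfl
  | succ n hn ih => rw [revSum, ih (fun i h1 h2 => h i h1 (by omega)), h n hn (by omega), zero_add]

theorem runs_finite {Q A : Type} (T : Q → A → Q → Prop) (q0 : Q)
    (wt : Q → A → Q → Ordl) (σ : ℕ → A) (hT : ∀ q a, {q' | T q a q'}.Finite) (m : ℕ) :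
    {p : Q × Ordl | ∃ q : ℕ → Q, IsRun T q0 m σ q ∧ p = (q m, runVal wt m σ q)}.Finite := by
  induction m with
  | zero =>
    refine (Set.finite_singleton (q0, (0 : Ordl))).subset ?_
    rintro p ⟨q, hq, rfl⟩
    simp [runVal, revSum, hq.1]
  | succ m ih =>
    refine (ih.biUnion (fun p _ => (hT p.1 (σ m)).image
      (fun s => (s, wt p.1 (σ m) s + p.2)))).subset ?_
    rintro p ⟨q, hq, rfl⟩
    simp only [Set.mem_iUnion]
    refine ⟨(q m, runVal wt m σ q), ⟨q, ⟨hq.1, fun i hi => hq.2 i (by omega)⟩, rfl⟩, ?_⟩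
    exact ⟨q (m + 1), hq.2 m (by omega), rfl⟩

def gord (strict : Bool) (a b : Ordl) : Prop := if strict then a < b else a ≤ b

theorem gord_le {s : Bool} {a b : Ordl} (h : gord s a b) : a ≤ b := by
  unfold gord at h; split at h
  · exact h.le
  · exact h

theorem gord_trans {s : Bool} {a b c : Ordl} (h : gord s a b) (h2 : b ≤ c) : gord s a c := by
  unfold gord at *; split at h
  · rename_i hs; simp only [hs, if_true]; exact h.trans_le h2
  · rename_i hs; simp only [hs]; exact h.trans h2

theorem gord_trans2 {s : Bool} {a b c : Ordl} (h2 : a ≤ b) (h : gord s b c) : gord s a c := by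
  unfold gord at *; split at h
  · rename_i hs; simp only [hs, if_true]; exact h2.trans_lt h
  · rename_i hs; simp only [hs]; exact h2.trans h

theorem lang_mem {Q A : Type} (T : Q → A → Q → Prop) (q0 : Q) (F : Q → Prop)
    (wt : Q → A → Q → Ordl) (m : ℕ) (σ : ℕ → A) (hT : ∀ q a, {q' | T q a q'}.Finite)
    (h : ∃ q : ℕ → Q, IsRun T q0 m σ q ∧ F (q m)) :
    ∃ q, IsRun T q0 m σ q ∧ F (q m) ∧ Lang T q0 F wt m σ = some (runVal wt m σ q) ∧
      ∀ q', IsRun T q0 m σ q' → F (q' m) → runVal wt m σ q' ≤ runVal wt m σ q := by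
  have hfin : {v : Ordl | ∃ q : ℕ → Q, IsRun T q0 m σ q ∧ F (q m) ∧ v = runVal wt m σ q}.Finite := by
    refine ((runs_finite T q0 wt σ hT m).image Prod.snd).subset ?_
    rintro v ⟨q, h1, h2, rfl⟩
    exact ⟨_, ⟨q, h1, rfl⟩, rfl⟩
  obtain ⟨q1, h1, h2⟩ := id h
  have hne : {v : Ordl | ∃ q : ℕ → Q, IsRun T q0 m σ q ∧ F (q m) ∧ v = runVal wt m σ q}.Nonempty :=
    ⟨_, q1, h1, h2, rfl⟩
  obtain ⟨q, k1, k2, k3⟩ := hne.csSup_mem hfin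
  refine ⟨q, k1, k2, ?_, ?_⟩
  · unfold Lang
    rw [if_pos h, k3]
  · intro q' r1 r2
    rw [← k3]
    exact le_csSup hfin.bddAbove ⟨q', r1, r2, rfl⟩

theorem lang_none {Q A : Type} (T : Q → A → Q → Prop) (q0 : Q) (F : Q → Prop)
    (wt : Q → A → Q → Ordl) (m : ℕ) (σ : ℕ → A)
    (h : ¬ ∃ q : ℕ → Q, IsRun T q0 m σ q ∧ F (q m)) : Lang T q0 F wt m σ = none := by
  unfold Lang
  rw [if_neg h]

theorem lang_ord {Q1 Q2 A : Type} (T1 : Q1 → A → Q1 → Prop) (i1 : Q1) (F1 : Q1 → Prop)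
    (wt1 : Q1 → A → Q1 → Ordl) (T2 : Q2 → A → Q2 → Prop) (i2 : Q2) (F2 : Q2 → Prop)
    (wt2 : Q2 → A → Q2 → Ordl) (m : ℕ) (σ : ℕ → A) (s : Bool)
    (hT1 : ∀ q a, {q' | T1 q a q'}.Finite) (hT2 : ∀ q a, {q' | T2 q a q'}.Finite) :
    OptOrd s (Lang T1 i1 F1 wt1 m σ) (Lang T2 i2 F2 wt2 m σ) ↔
    ∀ q, IsRun T1 i1 m σ q → F1 (q m) → ∃ q', IsRun T2 i2 m σ q' ∧ F2 (q' m) ∧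
      gord s (runVal wt1 m σ q) (runVal wt2 m σ q') := by
  have hsome : ∀ a b, OptOrd s (some a) (some b) ↔ gord s a b := by
    intro a b; cases s <;> simp [OptOrd, gord, OptLT, OptLE]
  by_cases h1 : ∃ q : ℕ → Q1, IsRun T1 i1 m σ q ∧ F1 (q m)
  · obtain ⟨q1, a1, a2, a3, a4⟩ := lang_mem T1 i1 F1 wt1 m σ hT1 h1
    by_cases h2 : ∃ q : ℕ → Q2, IsRun T2 i2 m σ q ∧ F2 (q m)
    · obtain ⟨q2, b1, b2, b3, b4⟩ := lang_mem T2 i2 F2 wt2 m σ hT2 h2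
      rw [a3, b3, hsome]
      constructor
      · intro h q c1 c2
        exact ⟨q2, b1, b2, gord_trans2 (a4 q c1 c2) h⟩
      · intro h
        obtain ⟨q', c1, c2, c3⟩ := h q1 a1 a2
        exact gord_trans c3 (b4 q' c1 c2)
    · rw [a3, lang_none T2 i2 F2 wt2 m σ h2]
      constructor
      · intro h; cases s <;> simp [OptOrd, OptLT, OptLE] at h
      · intro h
        obtain ⟨q', c1, c2, c3⟩ := h q1 a1 a2
        exact absurd ⟨q', c1, c2⟩ h2
  · rw [lang_none T1 i1 F1 wt1 m σ h1]
    constructor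
    · intro _ q c1 c2
      exact absurd ⟨q, c1, c2⟩ h1
    · intro _; cases s <;> simp [OptOrd, OptLT, OptLE]

end Generic

section Specific

variable {S : CES} (P : PreProof S)

def EL (a b : P.Node × S.TA) : Prop := (P.δ1 a.1 b.1 a.2 b.2).isSome
def ER (a b : P.Node × S.TC) : Prop := (P.δ2 a.1 b.1 a.2 b.2).isSome
noncomputable def wL (a b : P.Node × S.TA) : ℕ := onat ((P.δ1 a.1 b.1 a.2 b.2).getD 0)
noncomputable def wR (a b : P.Node × S.TC) : ℕ := onat ((P.δ2 a.1 b.1 a.2 b.2).getD 0)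

abbrev BX := (_ : P.Node) × (S.TA × S.TA)

def EBin (a b : BX P) : Prop :=
  EL P (a.1, a.2.1) (b.1, b.2.1) ∧ EL P (a.1, a.2.2) (b.1, b.2.2)

theorem finite_steps : {k : ℕ | ∃ ν ν' τ τ', P.δ1 ν ν' τ τ' = some (k : Ordl)}.Finite := by
  classical
  have h : (⋃ ν : P.Node, ⋃ ν' : P.Node, ⋃ τ ∈ S.tvA (P.seqOf ν).1, ⋃ τ' ∈ S.tvA (P.seqOf ν').1,
      {k : ℕ | P.δ1 ν ν' τ τ' = some (k : Ordl)}).Finite := by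
    refine Set.finite_iUnion fun ν => Set.finite_iUnion fun ν' => ?_
    refine Set.Finite.biUnion (Finset.finite_toSet _) fun τ _ => ?_
    refine Set.Finite.biUnion (Finset.finite_toSet _) fun τ' _ => ?_
    refine Set.Subsingleton.finite ?_
    intro a ha b hb
    simp only [Set.mem_ofPred_eq] at ha hb
    rw [ha] at hb
    have := Option.some.inj hb
    exact_mod_cast this
  refine h.subset ?_
  rintro k ⟨ν, ν', τ, τ', hk⟩
  have := P.δ1_dom ν ν' τ τ' (by rw [hk]; rfl)
  simp only [Set.mem_iUnion]
  exact ⟨ν, ν', τ, this.2.1, τ', this.2.2, hk⟩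

theorem wL_le (a b : P.Node × S.TA) : wL P a b ≤ P.maxStepN := by
  unfold wL
  cases h : P.δ1 a.1 b.1 a.2 b.2 with
  | none =>
    have : onat (0 : Ordl) = 0 := by
      have := onat_spec (o := 0) Ordinal.omega0_pos
      exact_mod_cast this.symm
    simp [this]
  | some o =>
    by_cases ho : ∃ n : ℕ, o = n
    · have h1 : o = (onat o : Ordl) := onat_spec (Ordinal.lt_omega0.2 ho)
      refine le_csSup (finite_steps P).bddAbove ⟨a.1, b.1, a.2, b.2, ?_⟩
      rw [h]; simp only [Option.getD_some]; rw [← h1]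
    · have : onat o = 0 := by unfold onat; rw [dif_neg ho]
      simp [this]

variable {P}

theorem followsL_of_walk {ν : P.Node} {τ : S.TA} (hτ : τ ∈ S.tvA (P.seqOf ν).1) {n k : ℕ}
    {νs : ℕ → P.Node} {τs : ℕ → S.TA} (h0 : νs 0 = ν) (h1 : τs 0 = τ) (hk : k + 1 ≤ n)
    (hw : GWalk (EL P) k (fun i => (νs i, τs i))) : P.FollowsL n νs (k + 1) τs := by
  refine ⟨hk, ?_, fun i hi => hw i (by omega)⟩
  intro i hi
  rcases i with _ | i
  · rw [h0, h1]; exact hτ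
  · exact (P.δ1_dom _ _ _ _ (hw i (by omega))).2.2

theorem followsR_of_walk {ν : P.Node} {τ : S.TC} (hτ : τ ∈ S.tvC (P.seqOf ν).2) {n k : ℕ}
    {νs : ℕ → P.Node} {τs : ℕ → S.TC} (h0 : νs 0 = ν) (h1 : τs 0 = τ) (hk : k + 1 ≤ n)
    (hw : GWalk (ER P) k (fun i => (νs i, τs i))) : P.FollowsR n νs (k + 1) τs := by
  refine ⟨hk, ?_, fun i hi => hw i (by omega)⟩
  intro i hi
  rcases i with _ | i
  · rw [h0, h1]; exact hτ
  · exact (P.δ2_dom _ _ _ _ (hw i (by omega))).2.2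

theorem reachL_of_walk {ν : P.Node} {τ : S.TA} (hτ : τ ∈ S.tvA (P.seqOf ν).1) {n : ℕ}
    {νs : ℕ → P.Node} {τs : ℕ → S.TA} (h0 : νs 0 = ν) (h1 : τs 0 = τ)
    (hw : GWalk (EL P) n (fun i => (νs i, τs i))) (i : ℕ) (hi : i ≤ n) :
    P.ReachL ν τ (νs i) (τs i) :=
  ⟨i + 1, νs, τs, by omega, fun j hj => (P.δ1_dom _ _ _ _ (hw j (by omega))).1,
    followsL_of_walk hτ h0 h1 le_rfl (fun j hj => hw j (by omega)), h0, h1, rfl, rfl⟩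

theorem reachR_of_walk {ν : P.Node} {τ : S.TC} (hτ : τ ∈ S.tvC (P.seqOf ν).2) {n : ℕ}
    {νs : ℕ → P.Node} {τs : ℕ → S.TC} (h0 : νs 0 = ν) (h1 : τs 0 = τ)
    (hw : GWalk (ER P) n (fun i => (νs i, τs i))) (i : ℕ) (hi : i ≤ n) :
    P.ReachR ν τ (νs i) (τs i) :=
  ⟨i + 1, νs, τs, by omega, fun j hj => (P.δ2_dom _ _ _ _ (hw j (by omega))).1,
    followsR_of_walk hτ h0 h1 le_rfl (fun j hj => hw j (by omega)), h0, h1, rfl, rfl⟩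

theorem stepL_cast {ν : P.Node} {τ : S.TA} (hτ : τ ∈ S.tvA (P.seqOf ν).1) (hfp : P.FinProgL ν τ)
    {n : ℕ} {νs : ℕ → P.Node} {τs : ℕ → S.TA} (h0 : νs 0 = ν) (h1 : τs 0 = τ)
    (hw : GWalk (EL P) n (fun i => (νs i, τs i))) (i : ℕ) (hi : i < n) :
    P.stepL νs τs i = (wL P (νs i, τs i) (νs (i + 1), τs (i + 1)) : Ordl) := by
  apply onat_spec
  obtain ⟨α, hα⟩ := Option.isSome_iff_exists.1 (hw i hi)
  have := hfp _ _ _ _ α (reachL_of_walk hτ h0 h1 hw i hi.le) hα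
  simp only at hα
  rw [PreProof.stepL, hα]; exact this

theorem stepR_cast {ν : P.Node} {τ : S.TC} (hτ : τ ∈ S.tvC (P.seqOf ν).2) (hfp : P.FinProgR ν τ)
    {n : ℕ} {νs : ℕ → P.Node} {τs : ℕ → S.TC} (h0 : νs 0 = ν) (h1 : τs 0 = τ)
    (hw : GWalk (ER P) n (fun i => (νs i, τs i))) (i : ℕ) (hi : i < n) :
    P.stepR νs τs i = (wR P (νs i, τs i) (νs (i + 1), τs (i + 1)) : Ordl) := by
  apply onat_spec
  obtain ⟨α, hα⟩ := Option.isSome_iff_exists.1 (hw i hi)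
  have := hfp _ _ _ _ α (reachR_of_walk hτ h0 h1 hw i hi.le) hα
  simp only at hα
  rw [PreProof.stepR, hα]; exact this

theorem thetaL_shift_cast {ν : P.Node} {τ : S.TA} (hτ : τ ∈ S.tvA (P.seqOf ν).1)
    (hfp : P.FinProgL ν τ)
    {n : ℕ} {νs : ℕ → P.Node} {τs : ℕ → S.TA} (h0 : νs 0 = ν) (h1 : τs 0 = τ)
    (hw : GWalk (EL P) n (fun i => (νs i, τs i))) (i r : ℕ) (hi : i + r ≤ n) :
    P.thetaL (fun t => νs (i + t)) (fun t => τs (i + t)) (r + 1) =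
      (wsum (wL P) (fun t => (νs (i + t), τs (i + t))) r : Ordl) :=
  revSum_cast _ _ _ (fun j hj => stepL_cast hτ hfp h0 h1 hw (i + j) (by omega))

theorem thetaR_shift_cast {ν : P.Node} {τ : S.TC} (hτ : τ ∈ S.tvC (P.seqOf ν).2)
    (hfp : P.FinProgR ν τ)
    {n : ℕ} {νs : ℕ → P.Node} {τs : ℕ → S.TC} (h0 : νs 0 = ν) (h1 : τs 0 = τ)
    (hw : GWalk (ER P) n (fun i => (νs i, τs i))) (i r : ℕ) (hi : i + r ≤ n) :
    P.thetaR (fun t => νs (i + t)) (fun t => τs (i + t)) (r + 1) =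
      (wsum (wR P) (fun t => (νs (i + t), τs (i + t))) r : Ordl) :=
  revSum_cast _ _ _ (fun j hj => stepR_cast hτ hfp h0 h1 hw (i + j) (by omega))

theorem thetaL_cast {ν : P.Node} {τ : S.TA} (hτ : τ ∈ S.tvA (P.seqOf ν).1)
    (hfp : P.FinProgL ν τ)
    {n : ℕ} {νs : ℕ → P.Node} {τs : ℕ → S.TA} (h0 : νs 0 = ν) (h1 : τs 0 = τ)
    (hw : GWalk (EL P) n (fun i => (νs i, τs i))) :
    P.thetaL νs τs (n + 1) = (wsum (wL P) (fun t => (νs t, τs t)) n : Ordl) :=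
  revSum_cast _ _ _ (fun j hj => stepL_cast hτ hfp h0 h1 hw j (by omega))

theorem thetaR_cast {ν : P.Node} {τ : S.TC} (hτ : τ ∈ S.tvC (P.seqOf ν).2)
    (hfp : P.FinProgR ν τ)
    {n : ℕ} {νs : ℕ → P.Node} {τs : ℕ → S.TC} (h0 : νs 0 = ν) (h1 : τs 0 = τ)
    (hw : GWalk (ER P) n (fun i => (νs i, τs i))) :
    P.thetaR νs τs (n + 1) = (wsum (wR P) (fun t => (νs t, τs t)) n : Ordl) :=
  revSum_cast _ _ _ (fun j hj => stepR_cast hτ hfp h0 h1 hw j (by omega))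

theorem shift_cycleL {ν : P.Node} {τ : S.TA} (hτ : τ ∈ S.tvA (P.seqOf ν).1)
    {n : ℕ} {νs : ℕ → P.Node} {τs : ℕ → S.TA} (h0 : νs 0 = ν) (h1 : τs 0 = τ)
    (hw : GWalk (EL P) n (fun i => (νs i, τs i))) (i r : ℕ) (hr : 0 < r) (hi : i + r ≤ n)
    (hν : νs i = νs (i + r)) (hτs : τs i = τs (i + r)) :
    P.IsCycleL (r + 1) (fun t => νs (i + t)) (fun t => τs (i + t)) := by
  have hF := followsL_of_walk hτ h0 h1 le_rfl hw
  refine ⟨by omega, fun j hj => (P.δ1_dom _ _ _ _ (hw (i + j) (by omega))).1, ?_, ?_, ?_⟩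
  · exact ⟨le_rfl, fun j hj => hF.2.1 (i + j) (by omega), fun j hj => hF.2.2 (i + j) (by omega)⟩
  · simpa using hν.symm
  · simpa using hτs.symm

theorem posL {ν : P.Node} {τ : S.TA} {τ' : S.TC} (hτ : τ ∈ S.tvA (P.seqOf ν).1)
    (hfp : P.FinProgL ν τ) (hdyn : P.Dynamic ν τ τ')
    {n : ℕ} {νs : ℕ → P.Node} {τs : ℕ → S.TA} (h0 : νs 0 = ν) (h1 : τs 0 = τ)
    (hw : GWalk (EL P) n (fun i => (νs i, τs i))) (i j : ℕ) (hij : i < j) (hj : j ≤ n)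
    (he : (νs i, τs i) = (νs j, τs j)) (hs : GSimple (fun i => (νs i, τs i)) i j) :
    wsum (wL P) (fun i => (νs i, τs i)) i < wsum (wL P) (fun i => (νs i, τs i)) j := by
  obtain ⟨r, rfl⟩ := Nat.exists_eq_add_of_le hij.le
  rw [Prod.mk.injEq] at he
  have hc := shift_cycleL hτ h0 h1 hw i r (by omega) hj he.1 he.2
  have := hdyn.1 _ _ _ ⟨hc, fun a b ha hab hb hh =>
    hs (i + a) (i + b) (by omega) (by omega) (by omega) (Prod.ext hh.1 hh.2)⟩
    (reachL_of_walk hτ h0 h1 hw i (by omega))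
  rw [thetaL_shift_cast hτ hfp h0 h1 hw i r hj] at this
  have : 0 < wsum (wL P) (fun t => (νs (i + t), τs (i + t))) r := by exact_mod_cast this
  rw [wsum_shift]
  omega

theorem posR {ν : P.Node} {τ : S.TA} {τ' : S.TC} (hτ' : τ' ∈ S.tvC (P.seqOf ν).2)
    (hfp : P.FinProgR ν τ') (hdyn : P.Dynamic ν τ τ')
    {n : ℕ} {νs : ℕ → P.Node} {τs : ℕ → S.TC} (h0 : νs 0 = ν) (h1 : τs 0 = τ')
    (hw : GWalk (ER P) n (fun i => (νs i, τs i))) (i j : ℕ) (hij : i < j) (hj : j ≤ n)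
    (he : (νs i, τs i) = (νs j, τs j)) (hs : GSimple (fun i => (νs i, τs i)) i j) :
    wsum (wR P) (fun i => (νs i, τs i)) i < wsum (wR P) (fun i => (νs i, τs i)) j := by
  obtain ⟨r, rfl⟩ := Nat.exists_eq_add_of_le hij.le
  rw [Prod.mk.injEq] at he
  have hF := followsR_of_walk hτ' h0 h1 le_rfl hw
  have hc : P.IsCycleR (r + 1) (fun t => νs (i + t)) (fun t => τs (i + t)) := by
    refine ⟨by omega, fun j hj => (P.δ2_dom _ _ _ _ (hw (i + j) (by omega))).1, ?_, ?_, ?_⟩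
    · exact ⟨le_rfl, fun j hj => hF.2.1 (i + j) (by omega), fun j hj => hF.2.2 (i + j) (by omega)⟩
    · simpa using he.1.symm
    · simpa using he.2.symm
  have := hdyn.2 _ _ _ ⟨hc, fun a b ha hab hb hh =>
    hs (i + a) (i + b) (by omega) (by omega) (by omega) (Prod.ext hh.1 hh.2)⟩
    (reachR_of_walk hτ' h0 h1 hw i (by omega))
  rw [thetaR_shift_cast hτ' hfp h0 h1 hw i r hj] at this
  have : 0 < wsum (wR P) (fun t => (νs (i + t), τs (i + t))) r := by exact_mod_cast this
  rw [wsum_shift]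
  omega

theorem balancedL {ν : P.Node} {τ : S.TA} (hτ : τ ∈ S.tvA (P.seqOf ν).1)
    (hfp : P.FinProgL ν τ) (hbal : P.Balanced ν τ)
    {n : ℕ} {νs : ℕ → P.Node} {τs τs' : ℕ → S.TA} (h0 : νs 0 = ν) (h1 : τs 0 = τ) (h2 : τs' 0 = τ)
    (hw : GWalk (EL P) n (fun i => (νs i, τs i))) (hw' : GWalk (EL P) n (fun i => (νs i, τs' i))) :
    wsum (wL P) (fun i => (νs i, τs i)) n ≤ wsum (wL P) (fun i => (νs i, τs' i)) n
      + P.cycThreshold * P.maxStepN := by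
  have key := balanced_bound (X := BX P) (EBin P)
    (fun a b => wL P (a.1, a.2.1) (b.1, b.2.1)) (fun a b => wL P (a.1, a.2.2) (b.1, b.2.2))
    ⟨ν, τ, τ⟩
    (Finset.univ.sigma fun μ : P.Node => (S.tvA (P.seqOf μ).1) ×ˢ (S.tvA (P.seqOf μ).1))
    P.maxStepN (fun a b => wL_le P _ _) ?_ ?_ n (fun i => ⟨νs i, τs i, τs' i⟩)
    (fun i hi => ⟨hw i hi, hw' i hi⟩) (by simp [h0, h1, h2])
  · simp only [Finset.card_sigma, Finset.card_product] at key
    exact key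
  · intro n x hw h0 i hi
    have f1 := followsL_of_walk (νs := fun i => (x i).1) (τs := fun i => (x i).2.1) hτ
      (by simp [h0]) (by simp [h0]) le_rfl (fun i hi => (hw i hi).1)
    have f2 := followsL_of_walk (νs := fun i => (x i).1) (τs := fun i => (x i).2.2) hτ
      (by simp [h0]) (by simp [h0]) le_rfl (fun i hi => (hw i hi).2)
    simp only [Finset.mem_sigma, Finset.mem_univ, true_and, Finset.mem_product]
    exact ⟨f1.2.1 i (by omega), f2.2.1 i (by omega)⟩
  · intro n x hw h0 i j hij hj he hs
    obtain ⟨r, rfl⟩ := Nat.exists_eq_add_of_le hij.le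
    have w1 : GWalk (EL P) n (fun i => ((x i).1, (x i).2.1)) := fun i hi => (hw i hi).1
    have w2 : GWalk (EL P) n (fun i => ((x i).1, (x i).2.2)) := fun i hi => (hw i hi).2
    have c1 := shift_cycleL (νs := fun i => (x i).1) (τs := fun i => (x i).2.1) hτ
      (by simp [h0]) (by simp [h0]) w1 i r (by omega) hj (by simp only [he]) (by simp only [he])
    have c2 := shift_cycleL (νs := fun i => (x i).1) (τs := fun i => (x i).2.2) hτ
      (by simp [h0]) (by simp [h0]) w2 i r (by omega) hj (by simp only [he]) (by simp only [he])
    have := hbal _ _ _ _ ⟨c1, c2, fun a b ha hab hb hh =>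
      hs (i + a) (i + b) (by omega) (by omega) (by omega)
        (by
          obtain ⟨e1, e2, e3⟩ := hh
          rcases hxa : x (i + a) with ⟨u, v, w⟩
          rcases hxb : x (i + b) with ⟨u', v', w'⟩
          simp only [hxa, hxb] at e1 e2 e3
          subst e1 e2 e3; rfl)⟩
      (reachL_of_walk (νs := fun i => (x i).1) (τs := fun i => (x i).2.1) hτ
        (by simp [h0]) (by simp [h0]) w1 i (by omega))
      (reachL_of_walk (νs := fun i => (x i).1) (τs := fun i => (x i).2.2) hτ
        (by simp [h0]) (by simp [h0]) w2 i (by omega))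
    rw [thetaL_shift_cast (νs := fun i => (x i).1) (τs := fun i => (x i).2.1) hτ hfp
        (by simp [h0]) (by simp [h0]) w1 i r hj,
      thetaL_shift_cast (νs := fun i => (x i).1) (τs := fun i => (x i).2.2) hτ hfp
        (by simp [h0]) (by simp [h0]) w2 i r hj] at this
    have this : _ = _ := Nat.cast_injective this
    have e1 := wsum_shift (fun a b : BX P => wL P (a.1, a.2.1) (b.1, b.2.1)) x i r
    have e2 := wsum_shift (fun a b : BX P => wL P (a.1, a.2.2) (b.1, b.2.2)) x i r
    simp only [wsum] at this e1 e2 ⊢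
    omega

end Specific

section Main

variable {S : CES} {P : PreProof S}

theorem pump_right {ν : P.Node} {τ : S.TA} {τ' : S.TC} (hτ' : τ' ∈ S.tvC (P.seqOf ν).2)
    (hfp : P.FinProgR ν τ') (hdyn : P.Dynamic ν τ τ') {n : ℕ} {x : ℕ → P.Node × S.TC}
    (h0 : x 0 = (ν, τ')) (hw : GWalk (ER P) n x) (a b : ℕ) (hab : a < b) (hb : b ≤ n)
    (he : x a = x b) (M : ℕ) :
    ∃ (n' : ℕ) (y : ℕ → P.Node × S.TC), GWalk (ER P) n' y ∧ (∀ i ≤ b, y i = x i) ∧ b ≤ n' ∧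
      y n' = x n ∧ M ≤ wsum (wR P) y n' := by
  induction M with
  | zero => exact ⟨n, x, hw, fun _ _ => rfl, hb, rfl, Nat.zero_le _⟩
  | succ M ih =>
    obtain ⟨n', y, h1, h2, h3, h4, h5⟩ := ih
    have hy : y b = y a := by rw [h2 b le_rfl, h2 a hab.le, he]
    refine ⟨b + (n' - a), gsplice y b a, gsplice_walk h1 hy h3 (by omega), ?_, by omega, ?_, ?_⟩
    · intro i hi; rw [gsplice_le y hi, h2 i hi]
    · rw [gsplice_add y hy, show a + (n' - a) = n' by omega, h4]
    · have e := gsplice_wsum (wR P) hy (n' - a)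
      rw [show a + (n' - a) = n' by omega] at e
      have y0 : y 0 = (ν, τ') := by rw [h2 0 (by omega), h0]
      have := pos_cycle (wR P) y n' (posR (νs := fun i => (y i).1) (τs := fun i => (y i).2)
        hτ' hfp hdyn (by simp [y0]) (by simp [y0]) h1) a b hab h3 hy.symm
      omega

theorem walkL_of_follows {n k : ℕ} {νs : ℕ → P.Node} {τs : ℕ → S.TA}
    (h : P.FollowsL n νs k τs) (m : ℕ) (hm : m + 1 ≤ k) :
    GWalk (EL P) m (fun i => (νs i, τs i)) := fun i hi => h.2.2 i (by omega)

theorem walkR_of_follows {n k : ℕ} {νs : ℕ → P.Node} {τs : ℕ → S.TC}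
    (h : P.FollowsR n νs k τs) (m : ℕ) (hm : m + 1 ≤ k) :
    GWalk (ER P) m (fun i => (νs i, τs i)) := fun i hi => h.2.2 i (by omega)

theorem tvA_le_width (μ : P.Node) : (S.tvA (P.seqOf μ).1).card ≤ P.traceWidth :=
  le_trans (le_max_left _ _) (Finset.le_sup (f := fun ν : P.Node =>
    max (S.tvA (P.seqOf ν).1).card (S.tvC (P.seqOf ν).2).card) (Finset.mem_univ μ))

theorem tvC_le_width (μ : P.Node) : (S.tvC (P.seqOf μ).2).card ≤ P.traceWidth :=
  le_trans (le_max_right _ _) (Finset.le_sup (f := fun ν : P.Node =>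
    max (S.tvA (P.seqOf ν).1).card (S.tvC (P.seqOf ν).2).card) (Finset.mem_univ μ))

/-- In a large set of positions, a late repeat. -/
theorem late_repeat {X : Type*} [DecidableEq X] (T : Finset ℕ) (f : ℕ → X) (F : Finset X)
    (hF : ∀ t ∈ T, f t ∈ F) (hc : F.card < T.card) :
    ∃ a ∈ T, ∃ b ∈ T, a < b ∧ f a = f b ∧ T.card ≤ (T.filter (fun t => t ≤ b)).card + F.card := by
  set R := T.filter (fun b => ∃ a ∈ T, a < b ∧ f a = f b) with hR
  have hne : R.Nonempty := by
    obtain ⟨a, ha, b, hb, hab, he⟩ := Finset.exists_ne_map_eq_of_card_lt_of_maps_to hc hF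
    rcases lt_or_gt_of_ne hab with h | h
    · exact ⟨b, Finset.mem_filter.2 ⟨hb, a, ha, h, he⟩⟩
    · exact ⟨a, Finset.mem_filter.2 ⟨ha, b, hb, h, he.symm⟩⟩
  have hm := R.max'_mem hne
  have hmax := fun t ht => R.le_max' t ht
  set b := R.max' hne
  obtain ⟨hbT, a, ha, hab, he⟩ := Finset.mem_filter.1 hm
  refine ⟨a, ha, b, hbT, hab, he, ?_⟩
  have h1 : (T.filter (fun t => ¬ t ≤ b)).card ≤ F.card := by
    refine Finset.card_le_card_of_injOn f (fun t ht => hF t (Finset.mem_filter.1 ht).1) ?_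
    intro s hs t ht hst
    obtain ⟨hs1, hs2⟩ := Finset.mem_filter.1 (Finset.mem_coe.1 hs)
    obtain ⟨ht1, ht2⟩ := Finset.mem_filter.1 (Finset.mem_coe.1 ht)
    rcases lt_trichotomy s t with h | h | h
    · exact absurd (hmax t (Finset.mem_filter.2 ⟨ht1, s, hs1, h, hst⟩)) ht2
    · exact h
    · exact absurd (hmax s (Finset.mem_filter.2 ⟨hs1, t, ht1, h, hst.symm⟩)) hs2
  have := Finset.card_filter_add_card_filter_not (s := T) (fun t => t ≤ b)
  omega

theorem extend_trace (O : OTF S)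
    (Excl : P.Node → S.TC → Prop)
    (ν : P.Node) (τ : S.TA) (τ' : S.TC)
    (hτ : τ ∈ S.tvA (P.seqOf ν).1) (hτ' : τ' ∈ S.tvC (P.seqOf ν).2)
    (hfpL : P.FinProgL ν τ) (hfpR : P.FinProgR ν τ')
    (hdyn : P.Dynamic ν τ τ') (hbal : P.Balanced ν τ)
    (strict : Bool) (htvo : P.TVO O Excl strict ν τ τ')
    (n : ℕ) (νs : ℕ → P.Node) (τs : ℕ → S.TC)
    (hn0 : νs 0 = ν) (ht0 : τs 0 = τ') (hF : P.FollowsR n νs n τs)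
    (hterm : P.TerminalR (νs (n - 1)) (τs (n - 1)))
    (hex : ¬ Excl (νs (n - 1)) (τs (n - 1)))
    (k : ℕ) (σ : ℕ → S.TA) (hk1 : 1 ≤ k) (hkn : k < n) (hσ0 : σ 0 = τ)
    (hσ : P.FollowsL n νs k σ)
    (hN : 2 + P.cycThreshold * P.maxStepN * P.traceWidth + P.traceWidth <
      ((Finset.Ico k n).filter fun t => νs t = νs k).card) :
    ∃ (k' : ℕ) (σ' : ℕ → S.TA), k < k' ∧ k' ≤ n ∧ σ' 0 = τ ∧ P.FollowsL n νs k' σ' ∧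
      P.thetaL νs σ k ≤ P.thetaL νs σ' k' := by
  classical
  obtain ⟨n, rfl⟩ : ∃ n', n = n' + 1 := ⟨n - 1, by omega⟩
  set T := (Finset.Ico k (n + 1)).filter fun t => νs t = νs k with hT
  have hTm : ∀ t ∈ T, k ≤ t ∧ t ≤ n ∧ νs t = νs k := by
    intro t ht
    obtain ⟨h1, h2⟩ := Finset.mem_filter.1 ht
    have := Finset.mem_Ico.1 h1
    exact ⟨this.1, by omega, h2⟩
  have hwR := walkR_of_follows hF n le_rfl
  have hWc := tvC_le_width (P := P) (νs k)
  have hWa := tvA_le_width (P := P) (νs k)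
  obtain ⟨a, ha, b, hb, hab, he, hcard⟩ := late_repeat T τs (S.tvC (P.seqOf (νs k)).2)
    (fun t ht => by
      obtain ⟨h1, h2, h3⟩ := hTm t ht
      rw [← h3]; exact hF.2.1 t (by omega))
    (by omega)
  have ha' := hTm a ha
  have hb' := hTm b hb
  -- pump
  obtain ⟨n', y, y1, y2, y3, y4, y5⟩ := pump_right (x := fun i => (νs i, τs i)) hτ' hfpR hdyn
    (by simp [hn0, ht0]) hwR a b hab hb'.2.1 (by simp [ha'.2.2, hb'.2.2, he]) (b * P.maxStepN + 1)
  have y0 : y 0 = (ν, τ') := by rw [y2 0 (by omega)]; simp [hn0, ht0]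
  simp only [Nat.add_sub_cancel] at hterm hex
  obtain ⟨k', ρ, r1, r2, r3, r4, r5, -⟩ := htvo (n' + 1) (fun i => (y i).1) (fun i => (y i).2)
    (by omega) (fun i hi => (P.δ2_dom _ _ _ _ (y1 i (by omega))).1) (by simp [y0]) (by simp [y0])
    (followsR_of_walk (νs := fun i => (y i).1) (τs := fun i => (y i).2) hτ' (by simp [y0])
      (by simp [y0]) le_rfl y1)
    (by simp only [Nat.add_sub_cancel, y4]; exact hterm)
    (by simp only [Nat.add_sub_cancel, y4]; exact hex)
  obtain ⟨k', rfl⟩ : ∃ k'', k' = k'' + 1 := ⟨k' - 1, by omega⟩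
  have hwy := walkL_of_follows r4 k' le_rfl
  have r6 := gord_le (s := strict) r5
  rw [thetaR_cast (νs := fun i => (y i).1) (τs := fun i => (y i).2) hτ' hfpR (by simp [y0])
      (by simp [y0]) y1, thetaL_cast hτ hfpL (by simp [y0]) r3 hwy] at r6
  have r7 : wsum (wR P) y n' ≤ wsum (wL P) (fun t => ((y t).1, ρ t)) k' := by exact_mod_cast r6
  have r8 := wsum_le (wL P) _ (wL_le P) (fun t => ((y t).1, ρ t)) k'
  have hbk : b < k' := by
    by_contra hcon
    have : k' * P.maxStepN ≤ b * P.maxStepN := Nat.mul_le_mul_right _ (by omega)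
    omega
  -- the trace on the original path
  have hwb : GWalk (EL P) b (fun i => (νs i, ρ i)) := by
    intro i hi
    have := hwy i (by omega)
    simpa only [y2 i (by omega), y2 (i + 1) (by omega)] using this
  refine ⟨b + 1, ρ, by omega, by omega, r3, followsL_of_walk hτ hn0 r3 (by omega) hwb, ?_⟩
  obtain ⟨k, rfl⟩ : ∃ k'', k = k'' + 1 := ⟨k - 1, by omega⟩
  have hwσ := walkL_of_follows hσ k le_rfl
  rw [thetaL_cast hτ hfpL hn0 hσ0 hwσ, thetaL_cast hτ hfpL hn0 r3 hwb]
  have hbal' := balancedL hτ hfpL hbal hn0 hσ0 r3 hwσ (fun i hi => hwb i (by omega))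
  -- pigeonhole on the left
  set Tb := T.filter (fun t => t ≤ b) with hTb
  have hFb := followsL_of_walk hτ hn0 r3 le_rfl hwb
  obtain ⟨s, hs, hsc⟩ := Finset.exists_lt_card_fiber_of_mul_lt_card_of_maps_to
    (s := Tb) (t := S.tvA (P.seqOf (νs (k + 1))).1) (f := ρ) (n := P.cycThreshold * P.maxStepN)
    (fun t ht => by
      obtain ⟨h1, h2⟩ := Finset.mem_filter.1 ht
      rw [← (hTm t h1).2.2]
      exact hFb.2.1 t (by omega))
    (by
      have := Nat.mul_le_mul_right (P.cycThreshold * P.maxStepN) hWa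
      rw [mul_comm P.traceWidth] at this
      omega)
  obtain ⟨U, hU, hUc⟩ := Finset.exists_subset_card_eq (Nat.succ_le_of_lt hsc)
  have hmc := many_cycles (wL P) (fun i => (νs i, ρ i)) b (posL hτ hfpL hdyn hn0 r3 hwb)
    (νs (k + 1), s) (k + 1) (P.cycThreshold * P.maxStepN) b U le_rfl
    (fun t ht => by
      obtain ⟨h1, h2⟩ := Finset.mem_filter.1 (hU ht)
      obtain ⟨h3, h4⟩ := Finset.mem_filter.1 h1
      exact ⟨(hTm t h3).1, h4, by simp [(hTm t h3).2.2, h2]⟩) hUc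
  have := wsum_mono (wL P) (fun i => (νs i, ρ i)) (Nat.le_succ k)
  have : wsum (wL P) (fun i => (νs i, σ i)) k ≤ wsum (wL P) (fun i => (νs i, ρ i)) b := by
    simp only [Nat.succ_eq_add_one] at this
    omega
  exact_mod_cast this

theorem good_trace (O : OTF S)
    (Excl : P.Node → S.TC → Prop)
    (ν : P.Node) (τ : S.TA) (τ' : S.TC)
    (hτ : τ ∈ S.tvA (P.seqOf ν).1) (hτ' : τ' ∈ S.tvC (P.seqOf ν).2)
    (hfpL : P.FinProgL ν τ) (hfpR : P.FinProgR ν τ')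
    (hdyn : P.Dynamic ν τ τ') (hbal : P.Balanced ν τ)
    (strict : Bool) (htvo : P.TVO O Excl strict ν τ τ')
    (n : ℕ) (νs : ℕ → P.Node) (τs : ℕ → S.TC) (hn : 1 ≤ n) (hpath : P.IsPath n νs)
    (hn0 : νs 0 = ν) (ht0 : τs 0 = τ') (hF : P.FollowsR n νs n τs)
    (hterm : P.TerminalR (νs (n - 1)) (τs (n - 1)))
    (hex : ¬ Excl (νs (n - 1)) (τs (n - 1))) :
    ∃ (k : ℕ) (σ : ℕ → S.TA), 1 ≤ k ∧ k ≤ n ∧ σ 0 = τ ∧ P.FollowsL n νs k σ ∧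
      gord strict (P.thetaR νs τs n) (P.thetaL νs σ k) ∧
      (k < n → ((Finset.Ico k n).filter fun t => νs t = νs k).card ≤
        2 + P.cycThreshold * P.maxStepN * P.traceWidth + P.traceWidth) := by
  classical
  obtain ⟨k0, σ0, a1, a2, a3, a4, a5, -⟩ := htvo n νs τs hn hpath hn0 ht0 hF hterm hex
  let Q : ℕ → Prop := fun k => ∃ σ : ℕ → S.TA, 1 ≤ k ∧ σ 0 = τ ∧ P.FollowsL n νs k σ ∧
      gord strict (P.thetaR νs τs n) (P.thetaL νs σ k)
  have hQ : Q k0 := ⟨σ0, a1, a3, a4, a5⟩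
  have hspec := Nat.findGreatest_spec (P := Q) a2 hQ
  set k := Nat.findGreatest Q n with hk
  have hkn : k ≤ n := Nat.findGreatest_le n
  obtain ⟨σ, b1, b2, b3, b4⟩ := hspec
  refine ⟨k, σ, b1, hkn, b2, b3, b4, ?_⟩
  intro hlt
  by_contra hcon
  obtain ⟨k', σ', c1, c2, c3, c4, c5⟩ := extend_trace O Excl ν τ τ' hτ hτ' hfpL hfpR hdyn hbal
    strict htvo n νs τs hn0 ht0 hF hterm hex k σ b1 hlt b2 b3 (by omega)
  have : k' ≤ k := Nat.le_findGreatest c2 ⟨σ', by omega, c3, c4, gord_trans b4 c5⟩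
  omega

end Main

section Auto

variable {S : CES} {P : PreProof S}

theorem B_fin (O : OTF S) (Excl : P.Node → S.TC → Prop) (ν : P.Node) (τ' : S.TC)
    (q : BState P.Node S.TC) (a : Sig P) : {q' | BTrans P O Excl ν τ' q a q'}.Finite := by
  have h : ({BState.bot, BState.pair ν τ'} ∪ ⋃ μ : P.Node, (fun s => BState.pair μ s) ''
      (S.tvC (P.seqOf μ).2 : Set S.TC)).Finite :=
    (Set.toFinite _).union (Set.finite_iUnion fun μ => (Finset.finite_toSet _).image _)
  refine h.subset ?_
  intro q' hq
  cases hq with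
  | start => exact Or.inl (by simp)
  | step h1 h2 =>
    refine Or.inr ?_
    simp only [Set.mem_iUnion]
    exact ⟨_, _, (P.δ2_dom _ _ _ _ h2).2.2, rfl⟩
  | toBot => exact Or.inl (by simp)

theorem A_fin (O : OTF S) (N : ℕ) (ν : P.Node) (τ : S.TA)
    (q : AState P.Node S.TA) (a : Sig P) : {q' | ATransN P O N ν τ q a q'}.Finite := by
  cases q with
  | topn μ i =>
    refine (Set.toFinite {AState.topn μ i, AState.topn μ (i + 1)}).subset ?_
    intro q' hq
    cases hq <;> simp
  | _ =>
    have h : ({AState.bot, AState.pair ν τ} ∪ ((⋃ μ : P.Node, (fun s => AState.pair μ s) ''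
        (S.tvA (P.seqOf μ).1 : Set S.TA)) ∪ Set.range (fun μ : P.Node => AState.topn μ 1))).Finite :=
      (Set.toFinite _).union ((Set.finite_iUnion fun μ => (Finset.finite_toSet _).image _).union
        (Set.finite_range _))
    refine h.subset ?_
    intro q' hq
    simp only [Set.mem_union, Set.mem_iUnion]
    have h' : ∀ (μ μ' : P.Node) (σ σ' : S.TA), (P.δ1 μ μ' σ σ').isSome →
        σ' ∈ S.tvA (P.seqOf μ').1 := fun _ _ _ _ h2 => (P.δ1_dom _ _ _ _ h2).2.2
    rcases hq with _ | ⟨h1, h2⟩ | _ | _ | _ | _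
    all_goals first
      | exact Or.inr (Or.inr ⟨_, rfl⟩)
      | exact Or.inr (Or.inl ⟨_, _, h' _ _ _ _ h2, rfl⟩)
      | exact Or.inl (Or.inl rfl)
      | exact Or.inl (Or.inr rfl)

theorem runVal_B (m n : ℕ) (w : ℕ → Sig P) (q : ℕ → BState P.Node S.TC) (νs : ℕ → P.Node)
    (τs : ℕ → S.TC) (h0 : q 0 = .init) (hn : 1 ≤ n) (hnm : n ≤ m)
    (hq : ∀ i < n, q (i + 1) = .pair (νs i) (τs i))
    (hq2 : ∀ i, n < i → i ≤ m → ∀ μ s, q i ≠ .pair μ s) :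
    runVal (Bwt P) m w q = P.thetaR νs τs n := by
  unfold runVal PreProof.thetaR
  rw [revSum_tail _ n m hnm]
  · obtain ⟨n, rfl⟩ : ∃ n', n = n' + 1 := ⟨n - 1, by omega⟩
    rw [revSum_shift _ (by simp only [h0, Bwt])]
    apply revSum_congr
    intro i hi
    simp only [hq i (by omega), hq (i + 1) (by omega), Bwt, PreProof.stepR]
  · intro i h1 h2
    have := hq2 (i + 1) (by omega) (by omega)
    revert this
    cases q i <;> cases q (i + 1) <;> simp [Bwt]

theorem runVal_A (m n : ℕ) (w : ℕ → Sig P) (q : ℕ → AState P.Node S.TA) (νs : ℕ → P.Node)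
    (τs : ℕ → S.TA) (h0 : q 0 = .init) (hn : 1 ≤ n) (hnm : n ≤ m)
    (hq : ∀ i < n, q (i + 1) = .pair (νs i) (τs i))
    (hq2 : ∀ i, n < i → i ≤ m → ∀ μ s, q i ≠ .pair μ s) :
    runVal (Awt P) m w q = P.thetaL νs τs n := by
  unfold runVal PreProof.thetaL
  rw [revSum_tail _ n m hnm]
  · obtain ⟨n, rfl⟩ : ∃ n', n = n' + 1 := ⟨n - 1, by omega⟩
    rw [revSum_shift _ (by simp only [h0, Awt])]
    apply revSum_congr
    intro i hi
    simp only [hq i (by omega), hq (i + 1) (by omega), Awt, PreProof.stepL]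
  · intro i h1 h2
    have := hq2 (i + 1) (by omega) (by omega)
    revert this
    cases q i <;> cases q (i + 1) <;> simp [Awt]

/-- Shape of runs of the consequent automaton. -/
theorem B_shape (O : OTF S) (Excl : P.Node → S.TC → Prop) (ν : P.Node) (τ' : S.TC)
    (w : ℕ → Sig P) (q : ℕ → BState P.Node S.TC) (m : ℕ)
    (hr : IsRun (BTrans P O Excl ν τ') .init (m + 1) w q) :
    ∃ (νs : ℕ → P.Node) (τs : ℕ → S.TC), νs 0 = ν ∧ τs 0 = τ' ∧
      (∀ i < m, w i = Sum.inl (νs i) ∧ q (i + 1) = .pair (νs i) (τs i)) ∧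
      GWalk (ER P) (m - 1) (fun i => (νs i, τs i)) ∧
      ((w m = Sum.inl (νs m) ∧ q (m + 1) = .pair (νs m) (τs m) ∧
          GWalk (ER P) m (fun i => (νs i, τs i))) ∨
        (1 ≤ m ∧ q (m + 1) = .bot ∧ w m = Sum.inr (P.Tset O (νs (m - 1)) (τs (m - 1)), τs (m - 1)) ∧
          P.Axiomatic (νs (m - 1)) ∧ ¬ P.Ground O (νs (m - 1)) (τs (m - 1)) ∧
          ¬ Excl (νs (m - 1)) (τs (m - 1)))) := by
  induction m with
  | zero =>
    have h := hr.2 0 (by omega)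
    rw [hr.1] at h
    refine ⟨fun _ => ν, fun _ => τ', rfl, rfl, by simp, fun i hi => by omega, Or.inl ?_⟩
    generalize w 0 = a at h
    generalize hb : q (0 + 1) = b at h
    cases h
    exact ⟨rfl, rfl, fun i hi => by omega⟩
  | succ m ih =>
    obtain ⟨νs, τs, a1, a2, a3, a4, a5⟩ := ih ⟨hr.1, fun i hi => hr.2 i (by omega)⟩
    have h := hr.2 (m + 1) (by omega)
    rcases a5 with ⟨b1, b2, b3⟩ | ⟨b1, b2, b3⟩
    · rw [b2] at h
      generalize hwa : w (m + 1) = a at h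
      generalize hqb : q (m + 1 + 1) = b at h
      cases h with
      | step h1 h2 =>
        rename_i μ' σ'
        refine ⟨fun i => if i ≤ m then νs i else μ', fun i => if i ≤ m then τs i else σ',
          by simp [a1], by simp [a2], ?_, ?_, Or.inl ⟨by simp, by simp, ?_⟩⟩
        · intro i hi
          have : i ≤ m := by omega
          simp only [this, if_true]
          rcases Nat.lt_or_ge i m with h | h
          · exact a3 i h
          · obtain rfl : i = m := by omega
            exact ⟨b1, b2⟩
        · intro i hi
          simp only [show i ≤ m by omega, show i + 1 ≤ m by omega, if_true]
          exact b3 i (by omega)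
        · intro i hi
          simp only [show i ≤ m by omega, if_true]
          rcases Nat.lt_or_ge i m with h | h
          · simp only [show i + 1 ≤ m by omega, if_true]
            exact b3 i h
          · obtain rfl : i = m := by omega
            simpa [EL, ER] using h2
      | toBot h1 h2 h3 h4 =>
        refine ⟨νs, τs, a1, a2, ?_, b3, Or.inr ⟨by omega, rfl, rfl, h1, h3, h4⟩⟩
        intro i hi
        rcases Nat.lt_or_ge i m with h | h
        · exact a3 i h
        · obtain rfl : i = m := by omega
          exact ⟨b1, b2⟩
    · rw [b2] at h
      generalize w (m + 1) = a at h
      generalize q (m + 1 + 1) = b at h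
      cases h

/-- Shape of runs of the approximate antecedent automaton. -/
theorem A_shape (O : OTF S) (N : ℕ) (ν : P.Node) (τ : S.TA)
    (w : ℕ → Sig P) (q : ℕ → AState P.Node S.TA) (m : ℕ)
    (hr : IsRun (ATransN P O N ν τ) .init (m + 1) w q) :
    ∃ (k : ℕ) (νs : ℕ → P.Node) (σ : ℕ → S.TA), k ≤ m ∧ νs 0 = ν ∧ σ 0 = τ ∧
      (∀ i ≤ k, w i = Sum.inl (νs i) ∧ q (i + 1) = .pair (νs i) (σ i)) ∧
      GWalk (EL P) k (fun i => (νs i, σ i)) ∧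
      (∀ i, k + 1 < i → i ≤ m + 1 → (q i = .bot ∨ ∃ μ j, q i = .topn μ j)) := by
  induction m with
  | zero =>
    have h := hr.2 0 (by omega)
    rw [hr.1] at h
    refine ⟨0, fun _ => ν, fun _ => τ, le_rfl, rfl, rfl, ?_, fun i hi => by omega,
      fun i h1 h2 => by omega⟩
    intro i hi
    obtain rfl : i = 0 := by omega
    generalize w 0 = a at h
    generalize hb : q (0 + 1) = b at h
    cases h
    exact ⟨rfl, rfl⟩
  | succ m ih =>
    obtain ⟨k, νs, σ, a0, a1, a2, a3, a4, a5⟩ := ih ⟨hr.1, fun i hi => hr.2 i (by omega)⟩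
    have h := hr.2 (m + 1) (by omega)
    by_cases hnew : q (m + 1 + 1) = .bot ∨ ∃ μ j, q (m + 1 + 1) = .topn μ j
    · refine ⟨k, νs, σ, by omega, a1, a2, a3, a4, ?_⟩
      intro i h1 h2
      rcases Nat.lt_or_ge i (m + 2) with h | h
      · exact a5 i h1 (by omega)
      · obtain rfl : i = m + 1 + 1 := by omega
        exact hnew
    · rcases Nat.lt_or_ge k m with hkm | hkm
      · exfalso
        have h' := a5 (m + 1) (by omega) le_rfl
        generalize hwa : w (m + 1) = a at h
        generalize q (m + 1 + 1) = b at h hnew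
        rcases h' with h' | ⟨μ, j, h'⟩
        · rw [h'] at h; cases h
        · rw [h'] at h; cases h <;> simp at hnew
      · obtain rfl : k = m := by omega
        rw [(a3 k le_rfl).2] at h
        generalize hwa : w (k + 1) = a at h
        generalize hqb : q (k + 1 + 1) = b at h hnew
        cases h with
        | toBot => simp at hnew
        | toTopn => simp at hnew
        | step h1 h2 =>
          rename_i μ' σ'
          refine ⟨k + 1, fun i => if i ≤ k then νs i else μ', fun i => if i ≤ k then σ i else σ',
            le_rfl, by simp [a1], by simp [a2], ?_, ?_, fun i h1 h2 => by omega⟩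
          · intro i hi
            rcases Nat.lt_or_ge k i with h | h
            · obtain rfl : i = k + 1 := by omega
              simp [hwa, hqb]
            · simp only [h, if_true]
              exact a3 i h
          · intro i hi
            simp only [show i ≤ k by omega, if_true]
            rcases Nat.lt_or_ge i k with h | h
            · simp only [show i + 1 ≤ k by omega, if_true]
              exact a4 i h
            · obtain rfl : i = k := by omega
              simpa [EL, ER] using h2

end Auto

section Final

variable {S : CES} {P : PreProof S}

theorem automata_to_tvo (O : OTF S) (Excl : P.Node → S.TC → Prop)
    (ν : P.Node) (τ : S.TA) (τ' : S.TC) (hτ : τ ∈ S.tvA (P.seqOf ν).1)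
    (strict : Bool) (N : ℕ)
    (H : ∀ (m : ℕ) (w : ℕ → Sig P) (q : ℕ → BState P.Node S.TC),
      IsRun (BTrans P O Excl ν τ') .init m w q → BFinal P O Excl (q m) →
      ∃ q', IsRun (ATransN P O N ν τ) .init m w q' ∧ AFinal (q' m) ∧
        gord strict (runVal (Bwt P) m w q) (runVal (Awt P) m w q'))
    (hg : BGrounded P O Excl ν τ') : P.TVO O Excl strict ν τ τ' := by
  classical
  intro n νs τs hn hpath hn0 ht0 hF hterm hex
  obtain ⟨n, rfl⟩ : ∃ n', n = n' + 1 := ⟨n - 1, by omega⟩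
  simp only [Nat.add_sub_cancel] at *
  let w : ℕ → Sig P := fun i => if i ≤ n then Sum.inl (νs i) else
    Sum.inr (P.Tset O (νs n) (τs n), τs n)
  let q : ℕ → BState P.Node S.TC := fun i => match i with
    | 0 => .init
    | i + 1 => if i ≤ n then .pair (νs i) (τs i) else .bot
  have hw1 : ∀ i ≤ n, w i = Sum.inl (νs i) := fun i hi => by simp only [w, hi, if_true]
  have hq1 : ∀ i ≤ n, q (i + 1) = .pair (νs i) (τs i) := fun i hi => by simp only [q, hi, if_true]
  have hrun : IsRun (BTrans P O Excl ν τ') .init (n + 1) w q := by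
    refine ⟨rfl, ?_⟩
    intro i hi
    rw [hw1 i (by omega), hq1 i (by omega)]
    rcases i with _ | i
    · rw [hn0, ht0]; exact BTrans.start
    · rw [hq1 i (by omega)]
      exact BTrans.step (hpath i (by omega)) (hF.2.2 i (by omega))
  -- extraction
  have hext : ∀ m, n ≤ m → ∀ q', IsRun (ATransN P O N ν τ) .init (m + 1) w q' →
      ∃ (k : ℕ) (σ : ℕ → S.TA), k ≤ n ∧ σ 0 = τ ∧ P.FollowsL (n + 1) νs (k + 1) σ ∧
        (∀ i ≤ k, q' (i + 1) = .pair (νs i) (σ i)) ∧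
        (∀ i, k + 1 < i → i ≤ m + 1 → (q' i = .bot ∨ ∃ μ j, q' i = .topn μ j)) ∧
        runVal (Awt P) (m + 1) w q' = P.thetaL νs σ (k + 1) := by
    intro m hm q' hr
    obtain ⟨k, νs', σ, a0, a1, a2, a3, a4, a5⟩ := A_shape O N ν τ w q' m hr
    have hkn : k ≤ n := by
      by_contra hcon
      have := (a3 k le_rfl).1
      simp only [w, if_neg hcon] at this
      cases this
    have hνs : ∀ i ≤ k, νs' i = νs i := by
      intro i hi
      have := (a3 i hi).1
      rw [hw1 i (by omega)] at this
      exact (Sum.inl.inj this).symm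
    have a3' : ∀ i ≤ k, q' (i + 1) = .pair (νs i) (σ i) := by
      intro i hi; rw [← hνs i hi]; exact (a3 i hi).2
    refine ⟨k, σ, hkn, a2, ?_, a3', a5, ?_⟩
    · refine followsL_of_walk hτ hn0 a2 (by omega) ?_
      intro i hi
      have := a4 i hi
      simpa only [hνs i (by omega), hνs (i + 1) (by omega)] using this
    · refine runVal_A _ _ _ _ _ _ hr.1 (by omega) (by omega) (fun i hi => a3' i (by omega)) ?_
      intro i h1 h2 μ s hcon
      rcases a5 i h1 h2 with h | ⟨_, _, h⟩ <;> rw [hcon] at h <;> cases h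
  by_cases hfin : BFinal P O Excl (.pair (νs n) (τs n))
  · obtain ⟨q', b1, b2, b3⟩ := H (n + 1) w q hrun (by rw [hq1 n le_rfl]; exact hfin)
    obtain ⟨k, σ, c1, c2, c3, c4, c5, c6⟩ := hext n le_rfl q' b1
    rw [c6, runVal_B (n + 1) (n + 1) w q νs τs rfl (by omega) le_rfl
      (fun i hi => hq1 i (by omega)) (fun i h1 h2 => by omega)] at b3
    exact ⟨k + 1, σ, by omega, by omega, c2, c3, b3,
      Or.inl (hg _ _ ⟨n + 1, w, q, hrun, hq1 n le_rfl, hfin⟩)⟩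
  · have hax : P.Axiomatic (νs n) ∧ ¬ P.Ground O (νs n) (τs n) := by
      simp only [BFinal] at hfin
      tauto
    have hrun2 : IsRun (BTrans P O Excl ν τ') .init (n + 1 + 1) w q := by
      refine ⟨rfl, ?_⟩
      intro i hi
      rcases Nat.lt_or_ge i (n + 1) with h | h
      · exact hrun.2 i h
      · obtain rfl : i = n + 1 := by omega
        rw [hq1 n le_rfl]
        have e1 : w (n + 1) = Sum.inr (P.Tset O (νs n) (τs n), τs n) := by simp [w]
        have e2 : q (n + 1 + 1) = .bot := by simp [q]
        rw [e1, e2]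
        exact BTrans.toBot hax.1 (hF.2.1 n (by omega)) hax.2 hex
    have hbot : q (n + 1 + 1) = .bot := by simp [q]
    obtain ⟨q', b1, b2, b3⟩ := H (n + 1 + 1) w q hrun2 (by rw [hbot]; trivial)
    obtain ⟨k, σ, c1, c2, c3, c4, c5, c6⟩ := hext (n + 1) (by omega) q' b1
    rw [c6, runVal_B (n + 1 + 1) (n + 1) w q νs τs rfl (by omega) (by omega)
      (fun i hi => hq1 i (by omega)) (fun i h1 h2 μ s hcon => by
        obtain rfl : i = n + 1 + 1 := by omega
        rw [hbot] at hcon; cases hcon)] at b3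
    have hlast := b1.2 (n + 1) (by omega)
    have e1 : w (n + 1) = Sum.inr (P.Tset O (νs n) (τs n), τs n) := by simp [w]
    rw [e1] at hlast
    have hkn : k = n := by
      by_contra hne
      rcases c5 (n + 1) (by omega) (by omega) with h | ⟨_, _, h⟩ <;> rw [h] at hlast <;> cases hlast
    subst hkn
    rw [c4 k le_rfl] at hlast
    refine ⟨k + 1, σ, by omega, le_rfl, c2, c3, b3, Or.inr ⟨hax.1, rfl, ?_⟩⟩
    generalize hT : P.Tset O (νs k) (τs k) = T at hlast
    generalize q' (k + 1 + 1) = b at hlast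
    cases hlast with
    | toBot h1 h2 h3 =>
      exact h3.2

theorem tvo_to_grounded (O : OTF S) (Excl : P.Node → S.TC → Prop)
    (ν : P.Node) (τ : S.TA) (τ' : S.TC) (hτ' : τ' ∈ S.tvC (P.seqOf ν).2)
    (strict : Bool) (htvo : P.TVO O Excl strict ν τ τ') : BGrounded P O Excl ν τ' := by
  rintro μ s ⟨m, w, q, hr, hq, hex, hfin⟩
  rcases hfin with ⟨h1, h2⟩ | ⟨h1, h2⟩
  · rcases m with _ | m
    · rw [hr.1] at hq; cases hq
    obtain ⟨νs, τs, a1, a2, a3, a4, a5⟩ := B_shape O Excl ν τ' w q m hr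
    rcases a5 with ⟨b1, b2, b3⟩ | ⟨b1, b2, b3⟩
    · rw [hq] at b2
      injection b2 with e1 e2
      subst e1 e2
      obtain ⟨k, σ, c1, c2, c3, c4, c5, c6⟩ := htvo (m + 1) νs τs (by omega)
        (fun i hi => (P.δ2_dom _ _ _ _ (b3 i (by omega))).1) a1 a2
        (followsR_of_walk hτ' a1 a2 le_rfl b3) (by simpa using h2) (by simpa using hex)
      simp only [Nat.add_sub_cancel] at c6
      rcases c6 with c6 | c6
      · exact c6
      · exact absurd c6.1 h1
    · rw [hq] at b2; cases b2
  · exact h2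

theorem tvo_to_lang (O : OTF S) (Excl : P.Node → S.TC → Prop)
    (ν : P.Node) (τ : S.TA) (τ' : S.TC)
    (hτ : τ ∈ S.tvA (P.seqOf ν).1) (hτ' : τ' ∈ S.tvC (P.seqOf ν).2)
    (hfpL : P.FinProgL ν τ) (hfpR : P.FinProgR ν τ')
    (hdyn : P.Dynamic ν τ τ') (hbal : P.Balanced ν τ)
    (strict : Bool) (htvo : P.TVO O Excl strict ν τ τ') (N : ℕ)
    (hN : N = 2 + P.cycThreshold * P.maxStepN * P.traceWidth + P.traceWidth)
    (m : ℕ) (w : ℕ → Sig P) (q : ℕ → BState P.Node S.TC)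
    (hr : IsRun (BTrans P O Excl ν τ') .init m w q) (hfin : BFinal P O Excl (q m)) :
      ∃ q', IsRun (ATransN P O N ν τ) .init m w q' ∧ AFinal (q' m) ∧
        gord strict (runVal (Bwt P) m w q) (runVal (Awt P) m w q') := by
  classical
  rcases m with _ | m
  · rw [hr.1] at hfin; exact absurd hfin (by simp [BFinal])
  obtain ⟨νs, τs, a1, a2, a3, a4, a5⟩ := B_shape O Excl ν τ' w q m hr
  rcases a5 with ⟨b1, b2, b3⟩ | ⟨b1, b2, b3, b4, b5, b6⟩
  · rw [b2] at hfin
    obtain ⟨hex, hfin⟩ := hfin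
    have hterm : P.TerminalR (νs m) (τs m) := by
      rcases hfin with h | h
      · exact h.2
      · intro ν' hν'; rw [h.1] at hν'; simp at hν'
    have hpath : P.IsPath (m + 1) νs := fun i hi => (P.δ2_dom _ _ _ _ (b3 i (by omega))).1
    have hF := followsR_of_walk hτ' a1 a2 le_rfl b3
    have hw : ∀ i ≤ m, w i = Sum.inl (νs i) := by
      intro i hi
      rcases Nat.lt_or_ge i m with h | h
      · exact (a3 i h).1
      · obtain rfl : i = m := by omega
        exact b1
    have hq : ∀ i ≤ m, q (i + 1) = .pair (νs i) (τs i) := by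
      intro i hi
      rcases Nat.lt_or_ge i m with h | h
      · exact (a3 i h).2
      · obtain rfl : i = m := by omega
        exact b2
    obtain ⟨k, σ, c1, c2, c3, c4, c5, c6⟩ := good_trace O Excl ν τ τ' hτ hτ' hfpL hfpR hdyn hbal
      strict htvo (m + 1) νs τs (by omega) hpath a1 a2 hF (by simpa using hterm) (by simpa using hex)
    rw [← hN] at c6
    let c : ℕ → ℕ := fun i => ((Finset.Ico k i).filter fun t => νs t = νs k).card
    let q' : ℕ → AState P.Node S.TA := fun i => match i with
      | 0 => .init
      | i + 1 => if i < k then .pair (νs i) (σ i) else .topn (νs k) (c (i + 1))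
    have q1 : ∀ i < k, q' (i + 1) = .pair (νs i) (σ i) := fun i hi => by simp only [q', hi, if_true]
    have q2 : ∀ i, k ≤ i → q' (i + 1) = .topn (νs k) (c (i + 1)) := fun i hi => by
      simp only [q', not_lt.2 hi, if_false]
    have cmono : ∀ i j, i ≤ j → c i ≤ c j := fun i j hij =>
      Finset.card_le_card (Finset.filter_subset_filter _ (Finset.Ico_subset_Ico_right hij))
    have csucc : ∀ i, k ≤ i → c (i + 1) = c i + if νs i = νs k then 1 else 0 := by
      intro i hi
      simp only [c]
      rw [← Finset.insert_Ico_right_eq_Ico_add_one hi, Finset.filter_insert]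
      split
      · rw [Finset.card_insert_of_notMem (by simp)]
      · rfl
    have ck : c (k + 1) = 1 := by
      rw [csucc k le_rfl]; simp [c]
    have hrun : IsRun (ATransN P O N ν τ) .init (m + 1) w q' := by
      refine ⟨rfl, ?_⟩
      intro i hi
      rw [hw i (by omega)]
      rcases Nat.lt_or_ge i k with hik | hik
      · rw [q1 i hik]
        rcases i with _ | i
        · rw [a1, c3]; exact ATransN.start
        · rw [q1 i (by omega)]
          exact ATransN.step (hpath i (by omega)) (c4.2.2 i (by omega))
      · rw [q2 i hik]
        obtain ⟨i, rfl⟩ : ∃ i', i = i' + 1 := ⟨i - 1, by omega⟩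
        rcases Nat.lt_or_ge i k with hik' | hik'
        · obtain rfl : k = i + 1 := by omega
          rw [q1 i hik', ck]
          exact ATransN.toTopn (hpath i (by omega))
        · rw [q2 i hik', csucc _ hik]
          have l1 : 0 < c (i + 1) := by
            have := cmono (k + 1) (i + 1) (by omega); omega
          have l2 : c (i + 1 + 1) ≤ N := (cmono _ (m + 1) (by omega)).trans (c6 (by omega))
          rw [csucc _ hik] at l2
          by_cases he : νs (i + 1) = νs k
          · simp only [he, if_true] at l2 ⊢
            exact ATransN.topnStep l1 (by omega)
          · simp only [he, if_false, add_zero] at l2 ⊢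
            exact ATransN.topnStay l1 l2 he
    refine ⟨q', hrun, ?_, ?_⟩
    · rcases Nat.lt_or_ge m k with h | h
      · rw [q1 m h]; simp [AFinal]
      · rw [q2 m h]; simp [AFinal]
    · rw [runVal_B (m + 1) (m + 1) w q νs τs hr.1 (by omega) le_rfl
        (fun i hi => hq i (by omega)) (fun i h1 h2 => by omega),
        runVal_A (m + 1) k w q' νs σ rfl c1 c2 q1 (fun i h1 h2 μ s hcon => by
          obtain ⟨i, rfl⟩ : ∃ i', i = i' + 1 := ⟨i - 1, by omega⟩
          rw [q2 i (by omega)] at hcon; cases hcon)]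
      exact c5
  · obtain ⟨n, rfl⟩ : ∃ n', m = n' + 1 := ⟨m - 1, by omega⟩
    simp only [Nat.add_sub_cancel] at *
    have hpath : P.IsPath (n + 1) νs := fun i hi => (P.δ2_dom _ _ _ _ (a4 i (by omega))).1
    have hF := followsR_of_walk hτ' a1 a2 le_rfl a4
    obtain ⟨k, σ, c1, c2, c3, c4, c5, c6⟩ := htvo (n + 1) νs τs (by omega) hpath a1 a2 hF
      (by simp only [Nat.add_sub_cancel]; intro ν' hν'; rw [b4] at hν'; simp at hν')
      (by simpa using b6)
    simp only [Nat.add_sub_cancel] at c6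
    rcases c6 with c6 | ⟨-, rfl, c6⟩
    · exact absurd c6 b5
    let q' : ℕ → AState P.Node S.TA := fun i => match i with
      | 0 => .init
      | i + 1 => if i ≤ n then .pair (νs i) (σ i) else .bot
    have q1 : ∀ i ≤ n, q' (i + 1) = .pair (νs i) (σ i) := fun i hi => by simp only [q', hi, if_true]
    have q2 : q' (n + 1 + 1) = .bot := by simp [q']
    refine ⟨q', ⟨rfl, ?_⟩, by rw [q2]; simp [AFinal], ?_⟩
    · intro i hi
      rcases Nat.lt_or_ge i (n + 1) with h | h
      · rw [(a3 i h).1, q1 i (by omega)]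
        rcases i with _ | i
        · rw [a1, c3]; exact ATransN.start
        · rw [q1 i (by omega)]
          exact ATransN.step (hpath i (by omega)) (c4.2.2 i (by omega))
      · obtain rfl : i = n + 1 := by omega
        rw [q1 n le_rfl, q2, b3]
        exact ATransN.toBot b4 (hF.2.1 n (by omega)) ⟨c4.2.1 n (by omega), c6⟩
    · rw [runVal_B (n + 1 + 1) (n + 1) w q νs τs hr.1 (by omega) (by omega)
        (fun i hi => (a3 i hi).2) (fun i h1 h2 μ s hcon => by
          obtain rfl : i = n + 1 + 1 := by omega
          rw [b2] at hcon; cases hcon),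
        runVal_A (n + 1 + 1) (n + 1) w q' νs σ rfl (by omega) (by omega)
        (fun i hi => q1 i (by omega)) (fun i h1 h2 μ s hcon => by
          obtain rfl : i = n + 1 + 1 := by omega
          rw [q2] at hcon; cases hcon)]
      exact c5

end Final

/-- **Restricted Automata Equivalence.**
If the cyclic proof `P` is finitely progressing, dynamic and balanced with
respect to `ν`, `τ ∈ TraceVals_𝒜(ν)` and `τ' ∈ TraceVals_𝒞(ν)`, and
`N = 2 + C(P)·maxStep(P)·W(P) + W(P)`, then for `∼ ∈ {<, ≤}` (given by
`strict`): `L_ℬ ∼ L_{𝒜(N)}` and `ℬ` grounded, iff `τ' ∼^ν_P τ`. -/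
theorem restricted_automata_equivalence
    (S : CES) (P : PreProof S) (O : OTF S)
    (Excl : P.Node → S.TC → Prop) (hExcl : P.ExclOK O Excl)
    (hproof : P.IsCyclicProof)
    (ν : P.Node) (τ : S.TA) (τ' : S.TC)
    (hτ : τ ∈ S.tvA (P.seqOf ν).1) (hτ' : τ' ∈ S.tvC (P.seqOf ν).2)
    (hfpL : P.FinProgL ν τ) (hfpR : P.FinProgR ν τ')
    (hdyn : P.Dynamic ν τ τ') (hbal : P.Balanced ν τ)
    (strict : Bool) :
    ((∀ (m : ℕ) (w : ℕ → Sig P),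
        OptOrd strict (LangB P O Excl ν τ' m w)
          (LangAN P O (2 + P.cycThreshold * P.maxStepN * P.traceWidth + P.traceWidth)
            ν τ m w)) ∧
      BGrounded P O Excl ν τ') ↔
    P.TVO O Excl strict ν τ τ' := by
  constructor
  · rintro ⟨h1, h2⟩
    refine automata_to_tvo O Excl ν τ τ' hτ strict
      (2 + P.cycThreshold * P.maxStepN * P.traceWidth + P.traceWidth) ?_ h2
    intro m w
    exact (lang_ord _ _ _ _ _ _ _ _ m w strict (B_fin O Excl ν τ') (A_fin O _ ν τ)).1 (h1 m w)
  · intro h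
    refine ⟨?_, tvo_to_grounded O Excl ν τ τ' hτ' strict h⟩
    intro m w
    refine (lang_ord _ _ _ _ _ _ _ _ m w strict (B_fin O Excl ν τ') (A_fin O _ ν τ)).2 ?_
    exact tvo_to_lang O Excl ν τ τ' hτ hτ' hfpL hfpR hdyn hbal strict h _ rfl m w
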